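/- arXiv:2408.11177 — 2 statements merged into one kernel-verified Lean document; each statement's English description precedes it below -/
import Mathlib

section
/- Assume J̄ < ∞, J_1 > 0, J is of order α ∈ (0,∞], and 1 < p < 1 + 4α′/d. Then K := inf { M[u]^{(p−1)/2} ⟨Lu,u⟩ / Σ_n |u_n|^{p+1} : u ∈ ℓ²(Z^d), u ≠ 0 } = 0. Consequently ν₀ = 0 and, for every ν > 0, I_ν < 0 and there exists q ∈ ℓ²(Z^d) with M[q] = ν and H[q] = I_ν. -/
open scoped BigOperators
open Filter Topology

noncomputable section

/-- The `ℓ^∞` norm of a lattice point of `ℤ^d`, as a natural number. -/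
def latNorm {d : ℕ} (m : Fin d → ℤ) : ℕ := Finset.univ.sup fun i => (m i).natAbs

/-- The summand `J_{|m|}` for `m ≠ 0` (and `0` for `m = 0`). -/
def JbarSummand (d : ℕ) (J : ℕ → ℝ) (m : Fin d → ℤ) : ℝ :=
  if m = 0 then 0 else J (latNorm m)

/-- `J̄ = Σ_{m ≠ 0} J_{|m|}`. -/
def Jbar (d : ℕ) (J : ℕ → ℝ) : ℝ := ∑' m : Fin d → ℤ, JbarSummand d J m

/-- The quadratic form `⟨Lu,u⟩ = (1/2) Σ_n Σ_{m ≠ n} J_{|n-m|} |u_n - u_m|²`. -/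
def pairing (d : ℕ) (J : ℕ → ℝ) (u : (Fin d → ℤ) → ℂ) : ℝ :=
  (1/2) * ∑' n : Fin d → ℤ, ∑' m : Fin d → ℤ,
    if m = n then 0 else J (latNorm (n - m)) * ‖u n - u m‖ ^ 2

/-- The mass `M[u] = Σ_n |u_n|²`. -/
def mass (d : ℕ) (u : (Fin d → ℤ) → ℂ) : ℝ := ∑' n : Fin d → ℤ, ‖u n‖ ^ 2

/-- Membership in `ℓ²(ℤ^d)`. -/
def MemL2 (d : ℕ) (u : (Fin d → ℤ) → ℂ) : Prop := Summable fun n : Fin d → ℤ => ‖u n‖ ^ 2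

/-- The potential term `Σ_n |u_n|^{p+1}`. -/
def ppot (d : ℕ) (p : ℝ) (u : (Fin d → ℤ) → ℂ) : ℝ := ∑' n : Fin d → ℤ, ‖u n‖ ^ (p + 1)

/-- The energy `H[u] = (1/2)⟨Lu,u⟩ - (1/(p+1)) Σ_n |u_n|^{p+1}`. -/
def energy (d : ℕ) (J : ℕ → ℝ) (p : ℝ) (u : (Fin d → ℤ) → ℂ) : ℝ :=
  (1/2) * pairing d J u - (1/(p+1)) * ppot d p u

/-- `I_ν = inf {H[q] : q ∈ ℓ², M[q] = ν}`. -/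
def Ifun (d : ℕ) (J : ℕ → ℝ) (p : ℝ) (ν : ℝ) : ℝ :=
  sInf {x : ℝ | ∃ q, MemL2 d q ∧ mass d q = ν ∧ energy d J p q = x}

open scoped ENNReal
/-- `J` is of order `α ∈ (0,∞]`: for finite `α`, `k^{d+α} J_k` tends to a finite positive
limit; for `α = ∞`, `k^{d+β} J_k → 0` for every `β > 0`. -/
def JOrder (d : ℕ) (J : ℕ → ℝ) (α : ℝ≥0∞) : Prop :=
  if α = ⊤ then
    ∀ β : ℝ, 0 < β → Tendsto (fun k : ℕ => (k : ℝ) ^ ((d : ℝ) + β) * J k) atTop (𝓝 0)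
  else
    ∃ A : ℝ, 0 < A ∧ Tendsto (fun k : ℕ => (k : ℝ) ^ ((d : ℝ) + α.toReal) * J k) atTop (𝓝 A)

/-- `α′ = α/2` for `α ∈ (0,2)` and `α′ = 1` for `α ∈ [2,∞]`. -/
def alphaPrime (α : ℝ≥0∞) : ℝ := if α < 2 then α.toReal / 2 else 1

/-- The Gagliardo–Nirenberg-type inequality at mass level `ν`:
`Σ_n |q_n|^{p+1} ≤ ((p+1)/2) ν^{-(p-1)/2} M[q]^{(p-1)/2} ⟨Lq,q⟩` for all `q ∈ ℓ²`. -/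
def GNineq (d : ℕ) (J : ℕ → ℝ) (p ν : ℝ) : Prop :=
  ∀ q : (Fin d → ℤ) → ℂ, MemL2 d q →
    ppot d p q ≤ ((p + 1) / 2) * ν ^ (-(p - 1) / 2) * (mass d q) ^ ((p - 1) / 2) *
      pairing d J q

/-- The excitation threshold `ν₀ = sup {ν > 0 : GN inequality holds at level ν}`,
with `ν₀ = 0` if no such `ν` exists. -/
def nuZero (d : ℕ) (J : ℕ → ℝ) (p : ℝ) : ℝ :=
  sSup (insert 0 {ν : ℝ | 0 < ν ∧ GNineq d J p ν})

/-- The variational constant `K = inf { M[u]^{(p-1)/2} ⟨Lu,u⟩ / Σ|u|^{p+1} : u ∈ ℓ², u ≠ 0 }`. -/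
def Kconst (d : ℕ) (J : ℕ → ℝ) (p : ℝ) : ℝ :=
  sInf {x : ℝ | ∃ u : (Fin d → ℤ) → ℂ, MemL2 d u ∧ u ≠ 0 ∧
    x = (mass d u) ^ ((p - 1) / 2) * pairing d J u / ppot d p u}


lemma latNorm_eq_norm {d : ℕ} (m : Fin d → ℤ) : (latNorm m : ℝ) = ‖m‖ := by
  apply le_antisymm
  · unfold latNorm
    rcases (Finset.univ : Finset (Fin d)).eq_empty_or_nonempty with h | h
    · simp [h]
    · obtain ⟨i, _, hi⟩ := Finset.exists_mem_eq_sup _ h (fun i => (m i).natAbs)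
      rw [hi]
      have := norm_le_pi_norm m i
      rw [Int.norm_eq_abs] at this
      rw [Nat.cast_natAbs]
      simpa using this
  · rw [pi_norm_le_iff_of_nonneg (Nat.cast_nonneg _)]
    intro i
    have : (m i).natAbs ≤ latNorm m :=
      Finset.le_sup (f := fun i => (m i).natAbs) (Finset.mem_univ i)
    have h2 : (((m i).natAbs : ℕ) : ℝ) ≤ latNorm m := by exact_mod_cast this
    rw [Int.norm_eq_abs]
    rw [Nat.cast_natAbs] at h2
    simpa using h2

lemma JbarSummand_nonneg {d : ℕ} {J : ℕ → ℝ} (hJ : ∀ k, 0 ≤ J k) (m : Fin d → ℤ) :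
    0 ≤ JbarSummand d J m := by
  unfold JbarSummand; split_ifs
  · exact le_rfl
  · exact hJ _

lemma hasSum_conv₁ {d : ℕ} {g h : (Fin d → ℤ) → ℝ} (hg : Summable g) (hh : Summable h)
    (g0 : ∀ n, 0 ≤ g n) (h0 : ∀ n, 0 ≤ h n) :
    HasSum (fun z : (Fin d → ℤ) × (Fin d → ℤ) => g z.1 * h (z.1 - z.2))
      ((∑' n, g n) * ∑' n, h n) := by
  have hs := hg.mul_of_nonneg hh g0 h0
  have := hg.hasSum.mul hh.hasSum hs
  let e : (Fin d → ℤ) × (Fin d → ℤ) ≃ (Fin d → ℤ) × (Fin d → ℤ) :=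
    ⟨fun z => (z.1, z.1 - z.2), fun z => (z.1, z.1 - z.2), fun z => by simp, fun z => by simp⟩
  exact (e.hasSum_iff (f := fun z : (Fin d → ℤ) × (Fin d → ℤ) => g z.1 * h z.2)).2 this

lemma hasSum_conv₂ {d : ℕ} {g h : (Fin d → ℤ) → ℝ} (hg : Summable g) (hh : Summable h)
    (g0 : ∀ n, 0 ≤ g n) (h0 : ∀ n, 0 ≤ h n) :
    HasSum (fun z : (Fin d → ℤ) × (Fin d → ℤ) => g z.2 * h (z.1 - z.2))
      ((∑' n, g n) * ∑' n, h n) := by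
  have hs := hg.mul_of_nonneg hh g0 h0
  have := hg.hasSum.mul hh.hasSum hs
  let e : (Fin d → ℤ) × (Fin d → ℤ) ≃ (Fin d → ℤ) × (Fin d → ℤ) :=
    ⟨fun z => (z.2, z.1 - z.2), fun z => (z.1 + z.2, z.1), fun z => by simp, fun z => by simp⟩
  exact (e.hasSum_iff (f := fun z : (Fin d → ℤ) × (Fin d → ℤ) => g z.1 * h z.2)).2 this

/-- The summand of the quadratic form on the product lattice. -/
def pairTerm (d : ℕ) (J : ℕ → ℝ) (u : (Fin d → ℤ) → ℂ) (z : (Fin d → ℤ) × (Fin d → ℤ)) : ℝ :=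
  JbarSummand d J (z.1 - z.2) * ‖u z.1 - u z.2‖ ^ 2

lemma pairTerm_nonneg {d : ℕ} {J : ℕ → ℝ} (hJ : ∀ k, 0 ≤ J k) (u : (Fin d → ℤ) → ℂ)
    (z : (Fin d → ℤ) × (Fin d → ℤ)) : 0 ≤ pairTerm d J u z :=
  mul_nonneg (JbarSummand_nonneg hJ _) (by positivity)

lemma norm_sub_sq_le (a b : ℂ) : ‖a - b‖ ^ 2 ≤ 2 * (‖a‖ ^ 2 + ‖b‖ ^ 2) := by
  have h := norm_sub_le a b
  have h0 := norm_nonneg (a - b)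
  nlinarith [sq_nonneg (‖a‖ - ‖b‖), norm_nonneg a, norm_nonneg b]

lemma pairTerm_bound {d : ℕ} {J : ℕ → ℝ} (hJ : ∀ k, 0 ≤ J k)
    (hJbar : Summable (JbarSummand d J)) {u : (Fin d → ℤ) → ℂ} (hu : MemL2 d u) :
    Summable (pairTerm d J u) ∧ ∑' z, pairTerm d J u z ≤ 4 * (mass d u * Jbar d J) := by
  have h1 := hasSum_conv₁ hu hJbar (fun _ => by positivity) (JbarSummand_nonneg hJ)
  have h2 := hasSum_conv₂ hu hJbar (fun _ => by positivity) (JbarSummand_nonneg hJ)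
  have h3 := (h1.add h2).mul_left 2
  have hle : ∀ z, pairTerm d J u z ≤ 2 * (‖u z.1‖ ^ 2 * JbarSummand d J (z.1 - z.2) +
      ‖u z.2‖ ^ 2 * JbarSummand d J (z.1 - z.2)) := by
    intro z
    unfold pairTerm
    have := mul_le_mul_of_nonneg_left (norm_sub_sq_le (u z.1) (u z.2))
      (JbarSummand_nonneg hJ (z.1 - z.2))
    nlinarith
  have hs := Summable.of_nonneg_of_le (pairTerm_nonneg hJ u) hle h3.summable
  refine ⟨hs, ?_⟩
  have := hs.tsum_le_tsum hle h3.summable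
  rw [h3.tsum_eq] at this
  unfold mass Jbar
  linarith

lemma pairing_eq {d : ℕ} {J : ℕ → ℝ} (hJ : ∀ k, 0 ≤ J k)
    (hJbar : Summable (JbarSummand d J)) {u : (Fin d → ℤ) → ℂ} (hu : MemL2 d u) :
    pairing d J u = 1/2 * ∑' z, pairTerm d J u z := by
  rw [(pairTerm_bound hJ hJbar hu).1.tsum_prod]
  unfold pairing pairTerm JbarSummand
  congr 1
  refine tsum_congr fun n => tsum_congr fun m => ?_
  by_cases h : m = n
  · simp [h]
  · have : n - m ≠ 0 := fun h' => h (sub_eq_zero.1 h').symm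
    simp [h, this]

lemma pairing_nonneg {d : ℕ} {J : ℕ → ℝ} (hJ : ∀ k, 0 ≤ J k) (u : (Fin d → ℤ) → ℂ) :
    0 ≤ pairing d J u := by
  unfold pairing
  refine mul_nonneg (by norm_num) (tsum_nonneg fun n => tsum_nonneg fun m => ?_)
  split_ifs
  · exact le_rfl
  · exact mul_nonneg (hJ _) (by positivity)

lemma rpow_split {p x δ : ℝ} (hp : 1 < p) (hx : 0 ≤ x) (h : x ≤ δ) :
    x ^ (p + 1) ≤ δ ^ (p - 1) * x ^ 2 := by
  have : x ^ (p + 1) = x ^ (p - 1) * x ^ 2 := by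
    rw [← Real.rpow_natCast x 2, ← Real.rpow_add_of_nonneg hx (by linarith) (by norm_num)]
    congr 1; push_cast; ring
  rw [this]
  gcongr

lemma mass_nonneg {d : ℕ} (u : (Fin d → ℤ) → ℂ) : 0 ≤ mass d u :=
  tsum_nonneg fun _ => by positivity

lemma norm_sq_le_mass {d : ℕ} {u : (Fin d → ℤ) → ℂ} (hu : MemL2 d u) (n : Fin d → ℤ) :
    ‖u n‖ ^ 2 ≤ mass d u := hu.le_tsum n (fun _ _ => by positivity)

lemma norm_le_sqrt_mass {d : ℕ} {u : (Fin d → ℤ) → ℂ} (hu : MemL2 d u) (n : Fin d → ℤ) :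
    ‖u n‖ ≤ Real.sqrt (mass d u) := Real.le_sqrt_of_sq_le (norm_sq_le_mass hu n)

lemma ppot_bound {d : ℕ} {p δ : ℝ} (hp : 1 < p) {u : (Fin d → ℤ) → ℂ} (hu : MemL2 d u)
    (hδ : ∀ n, ‖u n‖ ≤ δ) :
    Summable (fun n => ‖u n‖ ^ (p + 1)) ∧ ppot d p u ≤ δ ^ (p - 1) * mass d u := by
  have h1 : ∀ n, ‖u n‖ ^ (p + 1) ≤ δ ^ (p - 1) * ‖u n‖ ^ 2 := fun n =>
    rpow_split hp (norm_nonneg _) (hδ n)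
  have hs := Summable.of_nonneg_of_le (fun n => by positivity) h1 (hu.mul_left _)
  refine ⟨hs, ?_⟩
  have := hs.tsum_le_tsum h1 (hu.mul_left _)
  rwa [tsum_mul_left] at this

lemma ppot_summable {d : ℕ} {p : ℝ} (hp : 1 < p) {u : (Fin d → ℤ) → ℂ} (hu : MemL2 d u) :
    Summable (fun n => ‖u n‖ ^ (p + 1)) := (ppot_bound hp hu (norm_le_sqrt_mass hu)).1

lemma ppot_nonneg {d : ℕ} (p : ℝ) (u : (Fin d → ℤ) → ℂ) : 0 ≤ ppot d p u :=
  tsum_nonneg fun _ => by positivity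

lemma ppot_pos {d : ℕ} {p : ℝ} (hp : 1 < p) {u : (Fin d → ℤ) → ℂ} (hu : MemL2 d u)
    (h : u ≠ 0) : 0 < ppot d p u := by
  obtain ⟨n, hn⟩ := Function.ne_iff.1 h
  have hn' : 0 < ‖u n‖ := norm_pos_iff.2 hn
  exact (ppot_summable hp hu).tsum_pos (fun _ => by positivity) n (by positivity)

lemma mass_pos {d : ℕ} {u : (Fin d → ℤ) → ℂ} (hu : MemL2 d u)
    (h : u ≠ 0) : 0 < mass d u := by
  obtain ⟨n, hn⟩ := Function.ne_iff.1 h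
  have hn' : 0 < ‖u n‖ := norm_pos_iff.2 hn
  exact hu.tsum_pos (fun _ => by positivity) n (by positivity)

/-- scaling -/
def scl {d : ℕ} (t : ℝ) (u : (Fin d → ℤ) → ℂ) : (Fin d → ℤ) → ℂ := fun n => (t : ℂ) * u n

lemma scl_memL2 {d : ℕ} (t : ℝ) {u : (Fin d → ℤ) → ℂ} (hu : MemL2 d u) : MemL2 d (scl t u) := by
  unfold MemL2 scl
  simp only [norm_mul, mul_pow]
  exact Summable.mul_left (f := fun n => ‖u n‖ ^ 2) _ hu

lemma scl_mass {d : ℕ} (t : ℝ) (u : (Fin d → ℤ) → ℂ) : mass d (scl t u) = t ^ 2 * mass d u := by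
  unfold mass scl
  simp only [norm_mul, mul_pow, Complex.norm_real, Real.norm_eq_abs, sq_abs]
  rw [tsum_mul_left]

lemma scl_pairing {d : ℕ} (J : ℕ → ℝ) (t : ℝ) (u : (Fin d → ℤ) → ℂ) :
    pairing d J (scl t u) = t ^ 2 * pairing d J u := by
  unfold pairing scl
  rw [mul_left_comm]
  congr 1
  rw [← tsum_mul_left (a := t ^ 2)]
  refine tsum_congr fun n => ?_
  rw [← tsum_mul_left (a := t ^ 2)]
  refine tsum_congr fun m => ?_
  split_ifs
  · simp
  · rw [← mul_sub, norm_mul, mul_pow, Complex.norm_real, Real.norm_eq_abs, sq_abs]; ring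

lemma scl_ppot {d : ℕ} (p : ℝ) {t : ℝ} (ht : 0 ≤ t) (u : (Fin d → ℤ) → ℂ) :
    ppot d p (scl t u) = t ^ (p + 1) * ppot d p u := by
  unfold ppot scl
  rw [← tsum_mul_left]
  refine tsum_congr fun n => ?_
  rw [norm_mul, Complex.norm_real, Real.norm_of_nonneg ht, Real.mul_rpow ht (norm_nonneg _)]

lemma scl_energy {d : ℕ} (J : ℕ → ℝ) {p θ : ℝ} (hθ : 0 < θ) (u : (Fin d → ℤ) → ℂ) :
    energy d J p (scl (Real.sqrt θ) u) =
      θ * ((1/2) * pairing d J u - (1/(p+1)) * (θ ^ ((p - 1)/2) * ppot d p u)) := by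
  unfold energy
  rw [scl_pairing, scl_ppot p (Real.sqrt_nonneg _), Real.sq_sqrt hθ.le]
  have : Real.sqrt θ ^ (p + 1) = θ * θ ^ ((p - 1)/2) := by
    rw [Real.sqrt_eq_rpow, ← Real.rpow_mul hθ.le]
    nth_rw 2 [← Real.rpow_one θ]
    rw [← Real.rpow_add hθ]
    congr 1; ring
  rw [this]; ring

/-- translation -/
def trl {d : ℕ} (a : Fin d → ℤ) (u : (Fin d → ℤ) → ℂ) : (Fin d → ℤ) → ℂ := fun n => u (n + a)

lemma trl_memL2 {d : ℕ} (a : Fin d → ℤ) {u : (Fin d → ℤ) → ℂ} (hu : MemL2 d u) :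
    MemL2 d (trl a u) :=
  (Equiv.addRight a).summable_iff (f := fun n => ‖u n‖ ^ 2) |>.2 hu

lemma trl_mass {d : ℕ} (a : Fin d → ℤ) (u : (Fin d → ℤ) → ℂ) : mass d (trl a u) = mass d u :=
  (Equiv.addRight a).tsum_eq (fun n => ‖u n‖ ^ 2)

lemma trl_ppot {d : ℕ} (p : ℝ) (a : Fin d → ℤ) (u : (Fin d → ℤ) → ℂ) :
    ppot d p (trl a u) = ppot d p u :=
  (Equiv.addRight a).tsum_eq (fun n => ‖u n‖ ^ (p + 1))

lemma trl_pairing {d : ℕ} (J : ℕ → ℝ) (a : Fin d → ℤ) (u : (Fin d → ℤ) → ℂ) :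
    pairing d J (trl a u) = pairing d J u := by
  unfold pairing trl
  congr 1
  conv_rhs => rw [← (Equiv.addRight a).tsum_eq]
  refine tsum_congr fun n => ?_
  conv_rhs => rw [← (Equiv.addRight a).tsum_eq]
  refine tsum_congr fun m => ?_
  simp

lemma trl_energy {d : ℕ} (J : ℕ → ℝ) (p : ℝ) (a : Fin d → ℤ) (u : (Fin d → ℤ) → ℂ) :
    energy d J p (trl a u) = energy d J p u := by
  unfold energy; rw [trl_pairing, trl_ppot]

lemma summable_norm_rpow_int (d : ℕ) {r : ℝ} (hr : r < -(d : ℝ)) :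
    Summable (fun m : Fin d → ℤ => ‖m‖ ^ r) := by
  let L : Submodule ℤ (Fin d → ℝ) := Submodule.span ℤ (Set.range (Pi.basisFun ℝ (Fin d)))
  have hfr : Module.finrank ℤ L = d := by
    rw [ZLattice.rank ℝ L]; simp
  have hs := ZLattice.summable_norm_rpow L r (by rw [hfr]; exact hr)
  have hmem : ∀ m : Fin d → ℤ, (fun i => (m i : ℝ)) ∈ L := by
    intro m
    rw [Module.Basis.mem_span_iff_repr_mem]
    intro i
    simp
  have := hs.comp_injective (i := fun m : Fin d → ℤ => (⟨_, hmem m⟩ : L)) (by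
    intro a b hab
    have h := congrArg Subtype.val hab
    funext i
    have := congrFun h i
    simpa using this)
  refine this.congr fun m => ?_
  simp only [Function.comp]
  congr 1

lemma moment_summable {d : ℕ} {J : ℕ → ℝ} (hJ : ∀ k, 0 ≤ J k) {β γ A : ℝ} (hγ : 0 < γ) (h : γ < β)
    (hlim : Tendsto (fun k : ℕ => (k : ℝ) ^ ((d : ℝ) + β) * J k) atTop (𝓝 A)) :
    Summable (fun m : Fin d → ℤ => JbarSummand d J m * ‖m‖ ^ γ) := by
  obtain ⟨C, hC⟩ := hlim.bddAbove_range
  have hC' : ∀ k : ℕ, (k : ℝ) ^ ((d : ℝ) + β) * J k ≤ C := fun k => hC ⟨k, rfl⟩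
  have hs := (summable_norm_rpow_int d (r := γ - d - β) (by linarith)).mul_left C
  refine Summable.of_nonneg_of_le (fun m => mul_nonneg (JbarSummand_nonneg hJ m) (by positivity))
    (fun m => ?_) hs
  unfold JbarSummand
  split_ifs with hm
  · subst hm
    have := hC' 0
    have hb : (0:ℝ) < d + β := by have := Nat.cast_nonneg (α := ℝ) d; linarith
    simp only [Nat.cast_zero] at this
    rw [Real.zero_rpow hb.ne'] at this
    rw [zero_mul] at *
    positivity
  · have hm' : 0 < ‖m‖ := norm_pos_iff.2 hm
    have := hC' (latNorm m)
    rw [latNorm_eq_norm] at this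
    have e : ‖m‖ ^ (γ - d - β) * ‖m‖ ^ (d + β) = ‖m‖ ^ γ := by
      rw [← Real.rpow_add hm']; congr 1; ring
    rw [← e]
    have h3 : 0 ≤ ‖m‖ ^ (γ - d - β) := by positivity
    nlinarith

/-- tent -/
def tent (d : ℕ) (N : ℝ) (n : Fin d → ℤ) : ℂ := ((max 0 (1 - ‖n‖ / N) : ℝ) : ℂ)

lemma tent_norm {d : ℕ} {N : ℝ} (n : Fin d → ℤ) : ‖tent d N n‖ = max 0 (1 - ‖n‖ / N) := by
  unfold tent; rw [Complex.norm_real, Real.norm_of_nonneg (le_max_left _ _)]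

lemma tent_sub {d : ℕ} {N : ℝ} (hN : 0 < N) (n m : Fin d → ℤ) :
    ‖tent d N n - tent d N m‖ ≤ ‖n - m‖ / N ∧ ‖tent d N n - tent d N m‖ ≤ 1 := by
  unfold tent
  rw [← Complex.ofReal_sub, Complex.norm_real, Real.norm_eq_abs]
  have h1 : |‖n‖ - ‖m‖| ≤ ‖n - m‖ := abs_norm_sub_norm_le n m
  have h2 : |‖n‖ / N - ‖m‖ / N| ≤ ‖n - m‖ / N := by
    rw [← sub_div, abs_div, abs_of_pos hN]; gcongr
  have hn : 0 ≤ ‖n‖ / N := by positivity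
  have hm : 0 ≤ ‖m‖ / N := by positivity
  generalize ‖n‖ / N = a at *
  generalize ‖m‖ / N = b at *
  generalize ‖n - m‖ / N = c at *
  rw [abs_le] at *
  rw [abs_le]
  rcases max_cases 0 (1 - a) with h | h <;> rcases max_cases 0 (1 - b) with h' | h' <;>
    rw [h.1, h'.1] <;> refine ⟨⟨?_, ?_⟩, ?_, ?_⟩ <;> linarith

/-- box -/
def bx (d N : ℕ) : Finset (Fin d → ℤ) := Finset.Icc (fun _ => -(N : ℤ)) (fun _ => (N : ℤ))

lemma bx_card (d N : ℕ) : ((bx d N).card : ℝ) = (2 * N + 1) ^ d := by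
  unfold bx
  rw [Pi.card_Icc]
  simp only [Int.card_Icc, Finset.prod_const, Finset.card_univ, Fintype.card_fin]
  have : ((N : ℤ) + 1 - -(N : ℤ)).toNat = 2 * N + 1 := by omega
  rw [this]; push_cast; rfl

lemma mem_bx {d N : ℕ} (n : Fin d → ℤ) : n ∈ bx d N ↔ ‖n‖ ≤ N := by
  unfold bx
  rw [Finset.mem_Icc, pi_norm_le_iff_of_nonneg (Nat.cast_nonneg _), Pi.le_def, Pi.le_def,
    ← forall_and]
  refine forall_congr' fun i => ?_
  rw [Int.norm_eq_abs, abs_le]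
  norm_cast

lemma tent_zero {d N : ℕ} (hN : 0 < N) {n : Fin d → ℤ} (h : n ∉ bx d N) : tent d N n = 0 := by
  rw [mem_bx, not_le] at h
  have hN' : (0:ℝ) < N := by exact_mod_cast hN
  have : 1 < ‖n‖ / N := by rwa [lt_div_iff₀ hN', one_mul]
  unfold tent
  rw [max_eq_left (by linarith)]; simp

lemma tent_memL2 {d N : ℕ} (hN : 0 < N) : MemL2 d (tent d N) := by
  refine summable_of_ne_finset_zero (s := bx d N) fun n hn => ?_
  rw [tent_zero hN hn]; simp

lemma tent_norm_le_one {d N : ℕ} (n : Fin d → ℤ) : ‖tent d N n‖ ≤ 1 := by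
  rw [tent_norm]
  refine max_le zero_le_one ?_
  have : 0 ≤ ‖n‖ / N := by positivity
  linarith

lemma tent_mass {d N : ℕ} (hN : 0 < N) : mass d (tent d N) ≤ (2 * N + 1) ^ d := by
  unfold mass
  rw [tsum_eq_sum (s := bx d N) (fun n hn => by rw [tent_zero hN hn]; simp), ← bx_card]
  refine (Finset.sum_le_card_nsmul _ _ 1 fun n _ => ?_).trans (by simp)
  exact pow_le_one₀ (norm_nonneg _) (tent_norm_le_one n)

lemma tent_ppot {d L : ℕ} {p : ℝ} (hp : 1 < p) (hL : 0 < L) :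
    (1/2) ^ (p + 1) * (2 * L + 1) ^ d ≤ ppot d p (tent d ((2 * L : ℕ) : ℝ)) := by
  have hs := ppot_summable hp (tent_memL2 (d := d) (N := 2 * L) (by omega))
  refine le_trans ?_ (hs.sum_le_tsum (bx d L) (fun _ _ => by positivity))
  rw [← bx_card, mul_comm, ← nsmul_eq_mul]
  refine Finset.card_nsmul_le_sum _ _ _ fun n hn => ?_
  refine Real.rpow_le_rpow (by norm_num) ?_ (by linarith)
  rw [tent_norm]
  refine le_trans ?_ (le_max_right _ _)
  rw [mem_bx] at hn
  have hL' : (0:ℝ) < L := by exact_mod_cast hL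
  have : ‖n‖ / ((2 * L : ℕ) : ℝ) ≤ 1/2 := by
    rw [div_le_iff₀ (by positivity)]; push_cast; linarith
  linarith

lemma tent_pairing {d N : ℕ} (hN : 0 < N) {J : ℕ → ℝ} (hJ : ∀ k, 0 ≤ J k)
    (hJbar : Summable (JbarSummand d J)) {γ : ℝ} (hγ : 0 < γ) (hγ2 : γ ≤ 2)
    (hs : Summable (fun m : Fin d → ℤ => JbarSummand d J m * ‖m‖ ^ γ)) :
    pairing d J (tent d N) ≤
      (2 * N + 1) ^ d * ((∑' m : Fin d → ℤ, JbarSummand d J m * ‖m‖ ^ γ) * (N : ℝ) ^ (-γ)) := by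
  have hN' : (0:ℝ) < N := by exact_mod_cast hN
  rw [pairing_eq hJ hJbar (tent_memL2 hN)]
  let g : (Fin d → ℤ) → ℝ := fun n => if n ∈ bx d N then 1 else 0
  have hg0 : ∀ n, 0 ≤ g n := fun n => by simp only [g]; split_ifs <;> norm_num
  have hgs : HasSum g ((2 * N + 1) ^ d) := by
    have : HasSum g (∑ n ∈ bx d N, g n) :=
      hasSum_sum_of_ne_finset_zero fun n hn => by simp [g, hn]
    convert this using 1
    rw [← bx_card]
    simp [g]
  let h : (Fin d → ℤ) → ℝ := fun m => (JbarSummand d J m * ‖m‖ ^ γ) * (N : ℝ) ^ (-γ)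
  have hh : Summable h := hs.mul_right _
  have hh0 : ∀ m, 0 ≤ h m := fun m =>
    mul_nonneg (mul_nonneg (JbarSummand_nonneg hJ m) (by positivity)) (by positivity)
  have h1 := hasSum_conv₁ hgs.summable hh hg0 hh0
  have h2 := hasSum_conv₂ hgs.summable hh hg0 hh0
  have h3 := h1.add h2
  have hle : ∀ z, pairTerm d J (tent d N) z ≤ g z.1 * h (z.1 - z.2) + g z.2 * h (z.1 - z.2) := by
    intro z
    by_cases hz : z.1 ∉ bx d N ∧ z.2 ∉ bx d N
    · have : pairTerm d J (tent d N) z = 0 := by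
        unfold pairTerm; rw [tent_zero hN hz.1, tent_zero hN hz.2]; simp
      rw [this]
      have := hg0 z.1; have := hg0 z.2; have := hh0 (z.1 - z.2)
      positivity
    · have hg1 : 1 ≤ g z.1 + g z.2 := by
        have a := hg0 z.1; have b := hg0 z.2
        by_cases hz1 : z.1 ∈ bx d N
        · have : g z.1 = 1 := by simp [g, hz1]
          linarith
        · have hz2 : z.2 ∈ bx d N := by tauto
          have : g z.2 = 1 := by simp [g, hz2]
          linarith
      have key : pairTerm d J (tent d N) z ≤ h (z.1 - z.2) := by
        unfold pairTerm
        simp only [h]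
        rw [mul_assoc]
        refine mul_le_mul_of_nonneg_left ?_ (JbarSummand_nonneg hJ _)
        obtain ⟨ha, hb⟩ := tent_sub hN' z.1 z.2
        rw [Real.rpow_neg hN'.le, ← div_eq_mul_inv, ← Real.div_rpow (norm_nonneg _) hN'.le]
        refine le_trans ?_ (Real.rpow_le_rpow (norm_nonneg _) ha hγ.le)
        rw [← Real.rpow_natCast]
        exact Real.rpow_le_rpow_of_exponent_ge' (norm_nonneg _) hb hγ.le (by exact_mod_cast hγ2)
      have := hh0 (z.1 - z.2)
      nlinarith
  have := (pairTerm_bound hJ hJbar (tent_memL2 hN)).1.tsum_le_tsum hle h3.summable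
  rw [h3.tsum_eq, hgs.tsum_eq] at this
  have e : ∑' n, h n = (∑' m : Fin d → ℤ, JbarSummand d J m * ‖m‖ ^ γ) * (N : ℝ) ^ (-γ) :=
    tsum_mul_right
  rw [e] at this
  linarith

lemma exists_moment {d : ℕ} (hd : 1 ≤ d) {p : ℝ} (hp : 1 < p) {J : ℕ → ℝ}
    (hJpos : ∀ k, 0 ≤ J k) {α : ℝ≥0∞} (horder : JOrder d J α)
    (hpsub : p < 1 + 4 * alphaPrime α / d) :
    ∃ γ : ℝ, d * (p - 1) / 2 < γ ∧ γ ≤ 2 ∧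
      Summable (fun m : Fin d → ℤ => JbarSummand d J m * ‖m‖ ^ γ) := by
  have hd' : (0:ℝ) < d := by exact_mod_cast hd
  have hs : d * (p - 1) / 2 < 2 * alphaPrime α := by
    have : p - 1 < 4 * alphaPrime α / d := by linarith
    rw [lt_div_iff₀ hd'] at this
    linarith
  have hs0 : 0 < d * (p - 1) / 2 := by
    have : 0 < p - 1 := by linarith
    positivity
  obtain ⟨γ, h1, h2⟩ := exists_between hs
  refine ⟨γ, h1, ?_, ?_⟩
  · refine h2.le.trans ?_
    unfold alphaPrime
    split_ifs with h
    · have := ENNReal.toReal_mono (by simp) h.le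
      simp at this
      linarith
    · norm_num
  · unfold JOrder at horder
    split_ifs at horder with htop
    · exact moment_summable hJpos (hs0.trans h1) (lt_add_one γ) (horder _ (by linarith))
    · obtain ⟨A, _, hA⟩ := horder
      refine moment_summable hJpos (hs0.trans h1) (h2.trans_le ?_) hA
      unfold alphaPrime
      split_ifs with h
      · linarith
      · have := ENNReal.toReal_mono htop (not_lt.1 h)
        simp at this
        linarith

lemma key_trial {d : ℕ} (hd : 1 ≤ d) {p : ℝ} (hp : 1 < p) {J : ℕ → ℝ}
    (hJpos : ∀ k, 0 ≤ J k) (hJbar : Summable (JbarSummand d J))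
    {α : ℝ≥0∞} (horder : JOrder d J α)
    (hpsub : p < 1 + 4 * alphaPrime α / d) {ε : ℝ} (hε : 0 < ε) :
    ∃ u : (Fin d → ℤ) → ℂ, MemL2 d u ∧ u ≠ 0 ∧
      mass d u ^ ((p - 1) / 2) * pairing d J u < ε * ppot d p u := by
  obtain ⟨γ, hγ, hγ2, hsum⟩ := exists_moment hd hp hJpos horder hpsub
  set s := d * (p - 1) / 2 with hs
  have hs0 : 0 < s := by
    have : 0 < p - 1 := by linarith
    have hd' : (0:ℝ) < d := by exact_mod_cast hd
    positivity
  set S := ∑' m : Fin d → ℤ, JbarSummand d J m * ‖m‖ ^ γ with hS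
  have hS0 : 0 ≤ S := tsum_nonneg fun m => mul_nonneg (JbarSummand_nonneg hJpos m) (by positivity)
  set C := 3 ^ s * 2 ^ d * 2 ^ (p + 1) * S with hC
  have hlim : Tendsto (fun L : ℕ => C * ((2 * L : ℕ) : ℝ) ^ (-(γ - s))) atTop (𝓝 (C * 0)) := by
    refine Tendsto.const_mul _ ?_
    refine (tendsto_rpow_neg_atTop (sub_pos.2 hγ)).comp ?_
    refine tendsto_natCast_atTop_atTop.comp ?_
    exact tendsto_id.const_mul_atTop' (by norm_num)
  rw [mul_zero] at hlim
  obtain ⟨L, hL1, hL2⟩ := ((hlim.eventually (gt_mem_nhds hε)).and (eventually_ge_atTop 1)).exists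
  have hN : 0 < 2 * L := by omega
  have hLr : (1:ℝ) ≤ L := by exact_mod_cast hL2
  have hQ := tent_ppot (d := d) (L := L) hp (by omega)
  have hQ0 : 0 < ppot d p (tent d ((2 * L : ℕ) : ℝ)) := lt_of_lt_of_le (by positivity) hQ
  refine ⟨tent d ((2 * L : ℕ) : ℝ), tent_memL2 hN, ?_, ?_⟩
  · intro h0
    rw [h0] at hQ0
    simp [ppot, Real.zero_rpow (show p + 1 ≠ 0 by linarith)] at hQ0
  have hM := tent_mass (d := d) hN
  have hP := tent_pairing (d := d) hN hJpos hJbar (hs0.trans hγ) hγ2 hsum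
  rw [← hS] at hP
  have hP0 := pairing_nonneg hJpos (tent d ((2 * L : ℕ) : ℝ))
  have hM0 := mass_nonneg (tent d ((2 * L : ℕ) : ℝ))
  set N : ℝ := ((2 * L : ℕ) : ℝ) with hNdef
  have hNL : N = 2 * L := by rw [hNdef]; push_cast; ring
  have hN1 : 1 ≤ N := by linarith
  have hM' : mass d (tent d N) ^ ((p - 1) / 2) ≤ 3 ^ s * N ^ s := by
    calc mass d (tent d N) ^ ((p - 1) / 2) ≤ ((3 * N) ^ d) ^ ((p - 1) / 2) := by
          refine Real.rpow_le_rpow hM0 (hM.trans ?_) (by linarith)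
          gcongr; linarith
      _ = (3 * N) ^ s := by
          rw [← Real.rpow_natCast, ← Real.rpow_mul (by positivity)]; congr 1; rw [hs]; ring
      _ = _ := Real.mul_rpow (by norm_num) (by linarith)
  have hP' : pairing d J (tent d N) ≤ 2 ^ d * 2 ^ (p + 1) * S * N ^ (-γ) * ppot d p (tent d N) := by
    have hb : (2 * N + 1) ^ d ≤ 2 ^ d * (2 ^ (p + 1) * ppot d p (tent d N)) := by
      calc (2 * N + 1) ^ d ≤ (2 * (2 * L + 1 : ℝ)) ^ d := by gcongr; linarith
        _ = 2 ^ d * (2 * L + 1 : ℝ) ^ d := mul_pow _ _ _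
        _ ≤ _ := by
          gcongr
          have : (2:ℝ) ^ (p + 1) * ((1/2) ^ (p + 1)) = 1 := by
            rw [← Real.mul_rpow (by norm_num) (by norm_num)]; norm_num
          calc (2 * L + 1 : ℝ) ^ d = 2 ^ (p + 1) * ((1/2) ^ (p + 1) * (2 * L + 1 : ℝ) ^ d) := by
                rw [← mul_assoc, this, one_mul]
            _ ≤ _ := by gcongr
    have h0 : 0 ≤ S * N ^ (-γ) := by positivity
    have := mul_le_mul_of_nonneg_right hb h0
    refine hP.trans (this.trans (le_of_eq (by ring)))
  calc mass d (tent d N) ^ ((p - 1) / 2) * pairing d J (tent d N)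
      ≤ (3 ^ s * N ^ s) * (2 ^ d * 2 ^ (p + 1) * S * N ^ (-γ) * ppot d p (tent d N)) := by
        gcongr
    _ = C * N ^ (-(γ - s)) * ppot d p (tent d N) := by
        have : N ^ (-(γ - s)) = N ^ s * N ^ (-γ) := by
          rw [← Real.rpow_add (by linarith)]; congr 1; ring
        rw [this, hC]; ring
    _ < ε * ppot d p (tent d N) := by gcongr

lemma weak_pair {ι : Type*} {f : ι → ℝ} {g : ℕ → ι → ℝ} {B : ℝ} (hf0 : ∀ i, 0 ≤ f i)
    (hg0 : ∀ k i, 0 ≤ g k i) (hf : Summable fun i => f i ^ 2)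
    (hg : ∀ k, Summable fun i => g k i ^ 2) (hB : ∀ k, ∑' i, g k i ^ 2 ≤ B)
    (hlim : ∀ i, Tendsto (fun k => g k i) atTop (𝓝 0)) :
    (∀ k, Summable fun i => f i * g k i) ∧
      Tendsto (fun k => ∑' i, f i * g k i) atTop (𝓝 0) := by
  classical
  have hsum : ∀ k, Summable fun i => f i * g k i := fun k => by
    refine Summable.of_nonneg_of_le (fun i => mul_nonneg (hf0 i) (hg0 k i)) (fun i => ?_)
      (hf.add (hg k))
    nlinarith [sq_nonneg (f i - g k i), hf0 i, hg0 k i, mul_nonneg (hf0 i) (hg0 k i)]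
  refine ⟨hsum, ?_⟩
  have hB0 : 0 ≤ B := (tsum_nonneg fun i => by positivity).trans (hB 0)
  rw [tendsto_order]
  refine ⟨fun a ha => Eventually.of_forall fun k => ha.trans_le
    (tsum_nonneg fun i => mul_nonneg (hf0 i) (hg0 k i)), fun ε hε => ?_⟩
  set η := ε / (3 * (B + 1)) with hη
  have hη0 : 0 < η := by positivity
  have hηB : η * B ≤ ε / 3 := by
    have : η * (B + 1) = ε / 3 := by rw [hη]; field_simp
    nlinarith
  have h1 : ∀ᶠ F : Finset ι in atTop, (∑' i, f i ^ 2) - η * ε / 3 < ∑ i ∈ F, f i ^ 2 :=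
    hf.hasSum.eventually (lt_mem_nhds (by
      have : 0 < η * ε / 3 := by positivity
      linarith))
  obtain ⟨F, hF⟩ := h1.exists
  have h2 : Tendsto (fun k => ∑ i ∈ F, f i * g k i) atTop (𝓝 0) := by
    have : Tendsto (fun k => ∑ i ∈ F, f i * g k i) atTop (𝓝 (∑ i ∈ F, f i * 0)) :=
      tendsto_finsetSum _ fun i _ => (hlim i).const_mul _
    simpa using this
  filter_upwards [h2.eventually (gt_mem_nhds (show 0 < ε / 3 by positivity))] with k hk
  have s1 : HasSum (fun i => if i ∈ F then f i ^ 2 else 0) (∑ i ∈ F, f i ^ 2) := by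
    have : HasSum (fun i => if i ∈ F then f i ^ 2 else 0)
        (∑ i ∈ F, if i ∈ F then f i ^ 2 else 0) :=
      hasSum_sum_of_ne_finset_zero fun n hn => by simp [hn]
    simpa using this
  have s2 : HasSum (fun i => if i ∈ F then f i * g k i else 0) (∑ i ∈ F, f i * g k i) := by
    have : HasSum (fun i => if i ∈ F then f i * g k i else 0)
        (∑ i ∈ F, if i ∈ F then f i * g k i else 0) :=
      hasSum_sum_of_ne_finset_zero fun n hn => by simp [hn]
    simpa using this
  have s3 := (s2.add ((hf.hasSum.sub s1).mul_left (1 / η))).add ((hg k).hasSum.mul_left η)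
  have hle : ∀ i, f i * g k i ≤ (if i ∈ F then f i * g k i else 0) +
      1 / η * (f i ^ 2 - (if i ∈ F then f i ^ 2 else 0)) + η * g k i ^ 2 := by
    intro i
    split_ifs
    · have : 0 ≤ η * g k i ^ 2 := by positivity
      simp only [sub_self, mul_zero]; linarith
    · have a : 1 / η * f i ^ 2 + η * g k i ^ 2 - 2 * (f i * g k i) = 1 / η * (f i - η * g k i) ^ 2 := by
        field_simp; ring
      have b : 0 ≤ 1 / η * (f i - η * g k i) ^ 2 := by positivity
      have c := mul_nonneg (hf0 i) (hg0 k i)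
      simp only [sub_zero]; linarith
  have h4 := (hsum k).tsum_le_tsum hle s3.summable
  rw [s3.tsum_eq] at h4
  have h5 : 1 / η * ((∑' i, f i ^ 2) - ∑ i ∈ F, f i ^ 2) < ε / 3 := by
    rw [one_div, inv_mul_lt_iff₀ hη0]; linarith
  have h6 : η * ∑' i, g k i ^ 2 ≤ η * B := mul_le_mul_of_nonneg_left (hB k) hη0.le
  linarith

lemma rpow_add_le_aux {s R x y : ℝ} (hs : 2 < s) (hy : 0 ≤ y) (hyx : y ≤ x)
    (hxR : x ≤ R) : (x + y) ^ s ≤ x ^ s + y ^ s + s * (2 * R) ^ (s - 2) * 2 * (x * y) := by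
  rcases eq_or_lt_of_le hy with h | hy'
  · subst h
    simp [Real.zero_rpow (show s ≠ 0 by linarith)]
  have hz : 0 < x + y := by linarith
  have h1 := one_add_mul_self_le_rpow_one_add (s := -(y / (x + y))) (by
    have : y / (x + y) ≤ 1 := by rw [div_le_one hz]; linarith
    linarith) (p := s) (by linarith)
  have h2 : 1 + -(y / (x + y)) = x / (x + y) := by field_simp; ring
  rw [h2, Real.div_rpow (by linarith) hz.le] at h1
  have hzs : 0 < (x + y) ^ s := by positivity
  rw [le_div_iff₀ hzs] at h1
  have h3 : (x + y) ^ s = (x + y) ^ (s - 2) * (x + y) * (x + y) := by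
    rw [mul_assoc, ← sq, ← Real.rpow_natCast, ← Real.rpow_add hz]; congr 1; push_cast; ring
  have h4 : s * (y / (x + y)) * (x + y) ^ s = s * (x + y) ^ (s - 2) * (y * (x + y)) := by
    rw [h3]; field_simp
  have h5 : (x + y) ^ (s - 2) ≤ (2 * R) ^ (s - 2) :=
    Real.rpow_le_rpow hz.le (by linarith) (by linarith)
  have h6 : s * (x + y) ^ (s - 2) * (y * (x + y)) ≤ s * (2 * R) ^ (s - 2) * (2 * (x * y)) := by
    have : 0 ≤ R := by linarith
    have h8 : y * (x + y) ≤ 2 * (x * y) := by nlinarith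
    gcongr ?_ * ?_
    gcongr
  have h7 : 0 ≤ y ^ s := by positivity
  nlinarith

lemma rpow_add_le' {s R x y : ℝ} (hs : 2 < s) (hx : 0 ≤ x) (hy : 0 ≤ y) (hyR : y ≤ R)
    (hxR : x ≤ R) : (x + y) ^ s ≤ x ^ s + y ^ s + s * (2 * R) ^ (s - 2) * 2 * (x * y) := by
  rcases le_total y x with h | h
  · exact rpow_add_le_aux hs hy h hxR
  · have := rpow_add_le_aux hs hx h hyR
    rw [add_comm x y, mul_comm x y]; linarith

lemma norm_add_sq_ge (a b : ℂ) : |‖a + b‖ ^ 2 - ‖a‖ ^ 2 - ‖b‖ ^ 2| ≤ 2 * (‖a‖ * ‖b‖) := by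
  have h1 := norm_add_le a b
  have h2 : |‖a‖ - ‖b‖| ≤ ‖a + b‖ := by
    have := abs_norm_sub_norm_le a (-b)
    simpa using this
  have h3 : (‖a‖ - ‖b‖) ^ 2 ≤ ‖a + b‖ ^ 2 := by
    rw [← sq_abs (‖a‖ - ‖b‖)]; gcongr
  have h4 : ‖a + b‖ ^ 2 ≤ (‖a‖ + ‖b‖) ^ 2 := by gcongr
  rw [abs_le]; constructor <;> nlinarith

lemma memL2_add {d : ℕ} {u v : (Fin d → ℤ) → ℂ} (hu : MemL2 d u) (hv : MemL2 d v) :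
    MemL2 d (u + v) := by
  refine Summable.of_nonneg_of_le (fun n => by positivity) (fun n => ?_)
    ((Summable.add hu hv).mul_left 2)
  have := norm_sub_sq_le (u n) (-(v n))
  simpa using this

lemma mass_sub_le {d : ℕ} {u v : (Fin d → ℤ) → ℂ} (hu : MemL2 d u) (hv : MemL2 d v) :
    MemL2 d (u - v) ∧ mass d (u - v) ≤ 2 * (mass d u + mass d v) := by
  have hle : ∀ n, ‖(u - v) n‖ ^ 2 ≤ 2 * (‖u n‖ ^ 2 + ‖v n‖ ^ 2) :=
    fun n => norm_sub_sq_le (u n) (v n)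
  have hs := (hu.hasSum.add hv.hasSum).mul_left 2
  have h1 : MemL2 d (u - v) := Summable.of_nonneg_of_le (fun n => by positivity) hle hs.summable
  refine ⟨h1, ?_⟩
  have := Summable.tsum_le_tsum hle h1 hs.summable
  rw [hs.tsum_eq] at this
  exact this

lemma mass_split {d : ℕ} {q : (Fin d → ℤ) → ℂ} {r : ℕ → (Fin d → ℤ) → ℂ} {B : ℝ}
    (hq : MemL2 d q) (hr : ∀ k, MemL2 d (r k)) (hB : ∀ k, mass d (r k) ≤ B)
    (hlim : ∀ n, Tendsto (fun k => r k n) atTop (𝓝 0)) :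
    Tendsto (fun k => mass d (q + r k) - mass d q - mass d (r k)) atTop (𝓝 0) := by
  obtain ⟨h1, h2⟩ := weak_pair (f := fun n => ‖q n‖) (g := fun k n => ‖r k n‖)
    (fun _ => norm_nonneg _) (fun _ _ => norm_nonneg _) hq hr hB
    (fun n => by simpa using (hlim n).norm)
  have h3 := h2.const_mul 2
  rw [mul_zero] at h3
  refine squeeze_zero_norm (fun k => ?_) h3
  rw [Real.norm_eq_abs]
  have hs := ((memL2_add hq (hr k)).hasSum.sub hq.hasSum).sub (hr k).hasSum
  have hs2 := (h1 k).hasSum.mul_left 2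
  have hle := fun n => norm_add_sq_ge (q n) (r k n)
  rw [abs_le]
  constructor
  · exact hasSum_le (fun n => (abs_le.1 (hle n)).1) hs2.neg hs
  · exact hasSum_le (fun n => (abs_le.1 (hle n)).2) hs hs2

lemma ppot_split {d : ℕ} {p : ℝ} (hp : 1 < p) {q : (Fin d → ℤ) → ℂ}
    {r : ℕ → (Fin d → ℤ) → ℂ} {B : ℝ}
    (hq : MemL2 d q) (hr : ∀ k, MemL2 d (r k)) (hB : ∀ k, mass d (r k) ≤ B)
    (hlim : ∀ n, Tendsto (fun k => r k n) atTop (𝓝 0)) :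
    ∃ e : ℕ → ℝ, Tendsto e atTop (𝓝 0) ∧
      ∀ k, ppot d p (q + r k) ≤ ppot d p q + ppot d p (r k) + e k := by
  obtain ⟨h1, h2⟩ := weak_pair (f := fun n => ‖q n‖) (g := fun k n => ‖r k n‖)
    (fun _ => norm_nonneg _) (fun _ _ => norm_nonneg _) hq hr hB
    (fun n => by simpa using (hlim n).norm)
  set R := Real.sqrt (mass d q) + Real.sqrt B with hR
  set C := (p + 1) * (2 * R) ^ (p + 1 - 2) * 2 with hC
  have h3 := h2.const_mul C
  rw [mul_zero] at h3
  refine ⟨_, h3, fun k => ?_⟩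
  have hs := ((ppot_summable hp hq).hasSum.add (ppot_summable hp (hr k)).hasSum).add
    ((h1 k).hasSum.mul_left C)
  refine hasSum_le (fun n => ?_) (ppot_summable hp (memL2_add hq (hr k))).hasSum hs
  have hqR : ‖q n‖ ≤ R := (norm_le_sqrt_mass hq n).trans (by
    rw [hR]; linarith [Real.sqrt_nonneg B])
  have hrR : ‖r k n‖ ≤ R := ((norm_le_sqrt_mass (hr k) n).trans (Real.sqrt_le_sqrt (hB k))).trans (by
    rw [hR]; linarith [Real.sqrt_nonneg (mass d q)])
  refine le_trans ?_ (rpow_add_le' (by linarith) (norm_nonneg _) (norm_nonneg _) hrR hqR)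
  exact Real.rpow_le_rpow (norm_nonneg _) (norm_add_le _ _) (by linarith)

lemma pairing_split {d : ℕ} {J : ℕ → ℝ} (hJ : ∀ k, 0 ≤ J k)
    (hJbar : Summable (JbarSummand d J)) {q : (Fin d → ℤ) → ℂ}
    {r : ℕ → (Fin d → ℤ) → ℂ} {B : ℝ}
    (hq : MemL2 d q) (hr : ∀ k, MemL2 d (r k)) (hB : ∀ k, mass d (r k) ≤ B)
    (hlim : ∀ n, Tendsto (fun k => r k n) atTop (𝓝 0)) :
    ∃ e : ℕ → ℝ, Tendsto e atTop (𝓝 0) ∧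
      ∀ k, pairing d J q + pairing d J (r k) - e k ≤ pairing d J (q + r k) := by
  have hJb0 : 0 ≤ Jbar d J := tsum_nonneg (JbarSummand_nonneg hJ)
  let D : ((Fin d → ℤ) → ℂ) → (Fin d → ℤ) × (Fin d → ℤ) → ℝ := fun u z =>
    Real.sqrt (JbarSummand d J (z.1 - z.2)) * ‖u z.1 - u z.2‖
  have hD0 : ∀ u z, 0 ≤ D u z := fun u z => by positivity
  have hD2 : ∀ u, (fun z => D u z ^ 2) = pairTerm d J u := fun u => by
    funext z
    simp only [D, pairTerm, mul_pow, Real.sq_sqrt (JbarSummand_nonneg hJ _)]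
  obtain ⟨h1, h2⟩ := weak_pair (f := D q) (g := fun k => D (r k)) (B := 4 * (B * Jbar d J))
    (hD0 _) (fun _ => hD0 _) (by rw [hD2]; exact (pairTerm_bound hJ hJbar hq).1)
    (fun k => by rw [hD2]; exact (pairTerm_bound hJ hJbar (hr k)).1)
    (fun k => by
      rw [hD2]
      refine (pairTerm_bound hJ hJbar (hr k)).2.trans ?_
      have := hB k
      gcongr)
    (fun z => by
      have : Tendsto (fun k => D (r k) z) atTop
          (𝓝 (Real.sqrt (JbarSummand d J (z.1 - z.2)) * ‖(0:ℂ) - 0‖)) :=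
        (((hlim z.1).sub (hlim z.2)).norm).const_mul _
      simpa using this)
  refine ⟨_, h2, fun k => ?_⟩
  rw [pairing_eq hJ hJbar hq, pairing_eq hJ hJbar (hr k),
    pairing_eq hJ hJbar (memL2_add hq (hr k))]
  have hs := ((pairTerm_bound hJ hJbar hq).1.hasSum.add
    (pairTerm_bound hJ hJbar (hr k)).1.hasSum).sub ((h1 k).hasSum.mul_left 2)
  have := hasSum_le (fun z => ?_) hs (pairTerm_bound hJ hJbar (memL2_add hq (hr k))).1.hasSum
  · linarith
  · have a := (abs_le.1 (norm_add_sq_ge (q z.1 - q z.2) (r k z.1 - r k z.2))).1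
    have e : (q z.1 - q z.2) + (r k z.1 - r k z.2) = (q + r k) z.1 - (q + r k) z.2 := by
      simp only [Pi.add_apply]; ring
    rw [e] at a
    have b := mul_le_mul_of_nonneg_left a (JbarSummand_nonneg hJ (z.1 - z.2))
    have c : D q z * D (r k) z = JbarSummand d J (z.1 - z.2) *
        (‖q z.1 - q z.2‖ * ‖r k z.1 - r k z.2‖) := by
      simp only [D]
      nth_rw 3 [← Real.mul_self_sqrt (JbarSummand_nonneg hJ (z.1 - z.2))]
      ring
    rw [c]
    unfold pairTerm
    linarith

lemma energy_bdd {d : ℕ} {J : ℕ → ℝ} {p : ℝ} (hp : 1 < p) (hJ : ∀ k, 0 ≤ J k) (ν : ℝ) :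
    BddBelow {x : ℝ | ∃ q, MemL2 d q ∧ mass d q = ν ∧ energy d J p q = x} := by
  refine ⟨-(1 / (p + 1) * (Real.sqrt ν ^ (p - 1) * ν)), ?_⟩
  rintro x ⟨q, hq, hm, rfl⟩
  have h1 := (ppot_bound hp hq (norm_le_sqrt_mass hq)).2
  have h2 := pairing_nonneg hJ q
  rw [hm] at h1
  have h3 : 1 / (p + 1) * ppot d p q ≤ 1 / (p + 1) * (Real.sqrt ν ^ (p - 1) * ν) := by
    have : 0 < p + 1 := by linarith
    gcongr
  unfold energy
  linarith

lemma Ifun_le {d : ℕ} {J : ℕ → ℝ} {p : ℝ} (hp : 1 < p) (hJ : ∀ k, 0 ≤ J k) {ν : ℝ}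
    {q : (Fin d → ℤ) → ℂ} (hq : MemL2 d q) (hm : mass d q = ν) : Ifun d J p ν ≤ energy d J p q :=
  csInf_le (energy_bdd hp hJ ν) ⟨q, hq, hm, rfl⟩

lemma scl_mass_eq {d : ℕ} {u : (Fin d → ℤ) → ℂ} {ν : ℝ} (hν : 0 < ν) (hu : 0 < mass d u) :
    mass d (scl (Real.sqrt (ν / mass d u)) u) = ν := by
  rw [scl_mass, Real.sq_sqrt (by positivity)]; field_simp

lemma energy_lower {d : ℕ} {J : ℕ → ℝ} {p : ℝ} (hp : 1 < p) (hJ : ∀ k, 0 ≤ J k) {ν : ℝ}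
    (hν : 0 < ν) {r : (Fin d → ℤ) → ℂ} (hr : MemL2 d r) (hm : mass d r ≤ ν) :
    mass d r / ν * Ifun d J p ν ≤ energy d J p r := by
  rcases eq_or_lt_of_le (mass_nonneg r) with h | h
  · rw [← h]
    have h1 := (ppot_bound hp hr (norm_le_sqrt_mass hr)).2
    rw [← h, mul_zero] at h1
    have h2 := pairing_nonneg hJ r
    have h3 : ppot d p r = 0 := le_antisymm h1 (ppot_nonneg p r)
    unfold energy
    rw [h3]; simp; exact h2
  · have h1 := Ifun_le hp hJ (scl_memL2 _ hr) (scl_mass_eq hν h)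
    have hθ : 1 ≤ ν / mass d r := by rwa [one_le_div h]
    rw [scl_energy J (by positivity)] at h1
    have h2 : 1 ≤ (ν / mass d r) ^ ((p - 1) / 2) := Real.one_le_rpow hθ (by linarith)
    have h3 : (1/2) * pairing d J r - (1/(p+1)) * ((ν / mass d r) ^ ((p - 1)/2) * ppot d p r) ≤
        energy d J p r := by
      unfold energy
      have := ppot_nonneg p r
      have : 0 < p + 1 := by linarith
      gcongr
      nlinarith
    have h4 := h1.trans (mul_le_mul_of_nonneg_left h3 (show 0 ≤ ν / mass d r by positivity))
    have h5 := mul_le_mul_of_nonneg_left h4 (show 0 ≤ mass d r / ν by positivity)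
    rwa [← mul_assoc, show mass d r / ν * (ν / mass d r) = 1 by field_simp, one_mul] at h5

lemma energy_strict {d : ℕ} {J : ℕ → ℝ} {p : ℝ} (hp : 1 < p) (hJ : ∀ k, 0 ≤ J k) {ν : ℝ}
    {q : (Fin d → ℤ) → ℂ} (hq : MemL2 d q) (hq0 : q ≠ 0) (hm : mass d q < ν) :
    Ifun d J p ν < ν / mass d q * energy d J p q := by
  have h := mass_pos hq hq0
  have hν : 0 < ν := h.trans hm
  have h1 := Ifun_le hp hJ (scl_memL2 _ hq) (scl_mass_eq hν h)
  have hθ : 1 < ν / mass d q := by rwa [one_lt_div h]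
  rw [scl_energy J (by positivity)] at h1
  have h2 : 1 < (ν / mass d q) ^ ((p - 1) / 2) := Real.one_lt_rpow hθ (by linarith)
  refine h1.trans_lt (mul_lt_mul_of_pos_left ?_ (by positivity))
  unfold energy
  have := ppot_pos hp hq hq0
  have : 0 < p + 1 := by linarith
  gcongr
  nlinarith

lemma exists_min {d : ℕ} {J : ℕ → ℝ} {p : ℝ} (hp : 1 < p) (hJ : ∀ k, 0 ≤ J k)
    (hJbar : Summable (JbarSummand d J)) {ν : ℝ} (hν : 0 < ν) (hI : Ifun d J p ν < 0) :
    ∃ q : (Fin d → ℤ) → ℂ, MemL2 d q ∧ mass d q = ν ∧ energy d J p q = Ifun d J p ν := by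
  set I := Ifun d J p ν with hIdef
  have hp1 : 0 < p + 1 := by linarith
  have hne : {x : ℝ | ∃ q, MemL2 d q ∧ mass d q = ν ∧ energy d J p q = x}.Nonempty := by
    by_contra h
    rw [Set.not_nonempty_iff_eq_empty] at h
    rw [hIdef] at hI
    unfold Ifun at hI
    rw [h, Real.sInf_empty] at hI
    exact lt_irrefl _ hI
  obtain ⟨x, -, hx, hxm⟩ := exists_seq_tendsto_sInf hne (energy_bdd hp hJ ν)
  change Tendsto x atTop (𝓝 I) at hx
  choose q0 hq0 hm0 he0 using hxm
  set c := (p + 1) * (-I / 2) with hc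
  have hc0 : 0 < c := mul_pos hp1 (by linarith)
  set δ := (c / (2 * ν)) ^ (1 / (p - 1)) with hδ
  have hδ0 : 0 < δ := by positivity
  have hδp : δ ^ (p - 1) * ν < c := by
    rw [hδ, ← Real.rpow_mul (by positivity), one_div, inv_mul_cancel₀ (by linarith), Real.rpow_one]
    field_simp
    linarith
  have hev : ∀ᶠ k in atTop, ∃ a, δ ≤ ‖q0 k a‖ := by
    filter_upwards [hx.eventually (gt_mem_nhds (show I < I / 2 by linarith))] with k hk
    by_contra hcon
    push Not at hcon
    have h1 := (ppot_bound hp (hq0 k) (fun n => (hcon n).le)).2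
    rw [hm0 k] at h1
    have h2 := he0 k
    have h3 := pairing_nonneg hJ (q0 k)
    unfold energy at h2
    have h4 : 1 / (p + 1) * ppot d p (q0 k) < 1 / (p + 1) * c := by gcongr; linarith
    have h5 : 1 / (p + 1) * c = - I / 2 := by rw [hc]; field_simp
    linarith
  obtain ⟨K, hK⟩ := eventually_atTop.1 hev
  choose a ha using fun k => hK (k + K) (by omega)
  set q1 : ℕ → (Fin d → ℤ) → ℂ := fun k => trl (a k) (q0 (k + K)) with hq1
  have hq1m : ∀ k, MemL2 d (q1 k) := fun k => trl_memL2 _ (hq0 _)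
  have hq1ν : ∀ k, mass d (q1 k) = ν := fun k => by rw [hq1]; simp only [trl_mass, hm0]
  have hq1e : ∀ k, energy d J p (q1 k) = x (k + K) := fun k => by
    rw [hq1]; simp only [trl_energy, he0]
  have hq10 : ∀ k, δ ≤ ‖q1 k 0‖ := fun k => by
    simp only [hq1, trl, zero_add]; exact ha k
  have hcomp : IsCompact (Set.pi Set.univ
      (fun _ : Fin d → ℤ => Metric.closedBall (0:ℂ) (Real.sqrt ν))) :=
    isCompact_univ_pi fun _ => isCompact_closedBall _ _
  obtain ⟨q, -, φ, hφ, hlim⟩ := hcomp.tendsto_subseq (x := q1) (fun k n _ => by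
    rw [mem_closedBall_zero_iff, ← hq1ν k]
    exact norm_le_sqrt_mass (hq1m k) n)
  rw [tendsto_pi_nhds] at hlim
  have hfin : ∀ F : Finset (Fin d → ℤ), ∑ n ∈ F, ‖q n‖ ^ 2 ≤ ν := fun F => by
    refine le_of_tendsto (tendsto_finsetSum F fun n _ => ((hlim n).norm.pow 2))
      (Eventually.of_forall fun k => ?_)
    rw [← hq1ν (φ k)]
    exact (hq1m (φ k)).sum_le_tsum F (fun _ _ => by positivity)
  have hqm : MemL2 d q := summable_of_sum_le (fun _ => by positivity) hfin
  have hqν : mass d q ≤ ν := hqm.tsum_le_of_sum_le hfin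
  have hq0' : δ ≤ ‖q 0‖ := ge_of_tendsto (hlim 0).norm (Eventually.of_forall fun k => hq10 _)
  have hqne : q ≠ 0 := fun h => by
    rw [h] at hq0'; simp at hq0'; linarith
  have hμ := mass_pos hqm hqne
  set r : ℕ → (Fin d → ℤ) → ℂ := fun k => q1 (φ k) - q with hr
  have hrm : ∀ k, MemL2 d (r k) := fun k => (mass_sub_le (hq1m _) hqm).1
  have hrB : ∀ k, mass d (r k) ≤ 2 * (ν + ν) := fun k => by
    have := (mass_sub_le (hq1m (φ k)) hqm).2
    rw [hq1ν] at this
    refine this.trans ?_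
    linarith
  have hrl : ∀ n, Tendsto (fun k => r k n) atTop (𝓝 0) := fun n => by
    have := (hlim n).sub_const (q n)
    rw [sub_self] at this
    exact this
  have hqr : ∀ k, q + r k = q1 (φ k) := fun k => by simp [hr]
  have hms := mass_split hqm hrm hrB hrl
  obtain ⟨e1, he1, h1⟩ := ppot_split hp hqm hrm hrB hrl
  obtain ⟨e2, he2, h2⟩ := pairing_split hJ hJbar hqm hrm hrB hrl
  simp only [hqr, hq1ν] at hms h1 h2
  have hmr : Tendsto (fun k => mass d (r k)) atTop (𝓝 (ν - mass d q)) := by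
    have := (tendsto_const_nhds (x := ν - mass d q)).sub hms
    simpa using this
  have hxx : Tendsto (fun k => x (φ k + K)) atTop (𝓝 I) :=
    hx.comp ((tendsto_add_atTop_nat K).comp hφ.tendsto_atTop)
  have hT : Tendsto (fun k => x (φ k + K) - mass d (r k) / ν * I + (1/2) * e2 k
      + 1 / (p + 1) * e1 k) atTop
      (𝓝 (I - (ν - mass d q) / ν * I + (1/2) * 0 + 1 / (p + 1) * 0)) :=
    ((hxx.sub ((hmr.div_const ν).mul_const I)).add (he2.const_mul _)).add (he1.const_mul _)
  have hmain : energy d J p q ≤ mass d q / ν * I := by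
    have : energy d J p q ≤ I - (ν - mass d q) / ν * I + (1/2) * 0 + 1 / (p + 1) * 0 := by
      refine ge_of_tendsto hT ?_
      filter_upwards [hmr.eventually (gt_mem_nhds (show ν - mass d q < ν by linarith))] with k hk
      have b1 := energy_lower hp hJ hν (hrm k) hk.le
      have b2 := hq1e (φ k)
      have b3 := h1 k
      have b4 := h2 k
      rw [← b2]
      have b5 : 1 / (p + 1) * ppot d p (q1 (φ k)) ≤
        1 / (p + 1) * (ppot d p q + ppot d p (r k) + e1 k) := by gcongr
      unfold energy at *
      linarith
    refine this.trans (le_of_eq ?_)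
    field_simp; ring
  rcases eq_or_lt_of_le hqν with h | h
  · refine ⟨q, hqm, h, le_antisymm ?_ (Ifun_le hp hJ hqm h)⟩
    rw [h, div_self hν.ne', one_mul] at hmain
    exact hmain
  · exfalso
    have b1 := energy_strict hp hJ hqm hqne h
    have b2 := mul_le_mul_of_nonneg_left hmain (show 0 ≤ ν / mass d q by positivity)
    rw [← mul_assoc, show ν / mass d q * (mass d q / ν) = 1 by field_simp, one_mul] at b2
    linarith


theorem stmt6 (d : ℕ) (hd : 1 ≤ d) (p : ℝ) (hp : 1 < p) (J : ℕ → ℝ)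
    (hJpos : ∀ k, 0 ≤ J k) (hJbar : Summable (JbarSummand d J)) (hJ1 : 0 < J 1)
    (α : ℝ≥0∞) (hα : 0 < α) (horder : JOrder d J α)
    (hpsub : p < 1 + 4 * alphaPrime α / d) :
    Kconst d J p = 0 ∧ nuZero d J p = 0 ∧
      ∀ ν : ℝ, 0 < ν → Ifun d J p ν < 0 ∧
        ∃ q : (Fin d → ℤ) → ℂ, MemL2 d q ∧ mass d q = ν ∧
          energy d J p q = Ifun d J p ν := by
  have key := fun {ε : ℝ} (hε : 0 < ε) => key_trial hd hp hJpos hJbar horder hpsub hε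
  have hp1 : 0 < p + 1 := by linarith
  refine ⟨?_, ?_, ?_⟩
  · have hb : ∀ x ∈ {x : ℝ | ∃ u : (Fin d → ℤ) → ℂ, MemL2 d u ∧ u ≠ 0 ∧
        x = (mass d u) ^ ((p - 1) / 2) * pairing d J u / ppot d p u}, 0 ≤ x := by
      rintro x ⟨u, hu, hu0, rfl⟩
      exact div_nonneg (mul_nonneg (Real.rpow_nonneg (mass_nonneg u) _) (pairing_nonneg hJpos u))
        (ppot_nonneg p u)
    refine le_antisymm (le_of_forall_pos_lt_add fun ε hε => ?_) (Real.sInf_nonneg hb)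
    obtain ⟨u, hu, hu0, h⟩ := key hε
    rw [zero_add]
    refine lt_of_le_of_lt (csInf_le ⟨0, hb⟩ ⟨u, hu, hu0, rfl⟩) ?_
    rwa [div_lt_iff₀ (ppot_pos hp hu hu0)]
  · have : {ν : ℝ | 0 < ν ∧ GNineq d J p ν} = ∅ := by
      rw [Set.eq_empty_iff_forall_notMem]
      rintro ν ⟨hν, hG⟩
      have hc : 0 < ((p + 1) / 2) * ν ^ (-(p - 1) / 2) := by positivity
      obtain ⟨u, hu, hu0, h⟩ := key (inv_pos.2 hc)
      have h1 := hG u hu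
      rw [lt_inv_mul_iff₀ hc, ← mul_assoc] at h
      linarith
    unfold nuZero
    rw [this]; simp
  · intro ν hν
    have hI : Ifun d J p ν < 0 := by
      have hc : 0 < 2 / (p + 1) * ν ^ ((p - 1) / 2) := by positivity
      obtain ⟨u, hu, hu0, h⟩ := key hc
      have hm := mass_pos hu hu0
      refine lt_of_le_of_lt (Ifun_le hp hJpos (scl_memL2 _ hu) (scl_mass_eq hν hm)) ?_
      rw [scl_energy J (by positivity)]
      refine mul_neg_of_pos_of_neg (by positivity) ?_
      rw [Real.div_rpow hν.le hm.le]
      have hmp : 0 < mass d u ^ ((p - 1) / 2) := by positivity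
      have : pairing d J u < 2 / (p + 1) * ν ^ ((p - 1) / 2) * ppot d p u /
          mass d u ^ ((p - 1) / 2) := by
        rw [lt_div_iff₀ hmp, mul_comm]; exact h
      have e : 2 / (p + 1) * ν ^ ((p - 1) / 2) * ppot d p u / mass d u ^ ((p - 1) / 2) =
        2 * (1 / (p + 1) * (ν ^ ((p - 1) / 2) / mass d u ^ ((p - 1) / 2) * ppot d p u)) := by
        ring
      rw [e] at this
      linarith
    exact ⟨hI, exists_min hp hJpos hJbar hν hI⟩
end
end

section
/- Let γ ∈ (0,2) and β > −1, and for ρ > 0 define F_ρ(ξ) = Σ_{n ∈ Z} e^{−ρ|n|^γ} cos(nξ) for ξ ∈ [−π,π]. Then there exist constants c, C, ρ₀ > 0 depending on β and γ such that for all ρ ∈ (0, ρ₀), c · g(ρ) ≤ ∫_{−π}^{π} |ξ|^β F_ρ(ξ)² dξ ≤ C · g(ρ), where g(ρ) = ρ^{(β−1)/γ} if −1 < β < 1+2γ, g(ρ) = ρ² |log ρ| if β = 1+2γ, and g(ρ) = ρ² if β > 1+2γ. -/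
noncomputable section

/-- `F_ρ(ξ) = Σ_{n ∈ ℤ} e^{-ρ|n|^γ} cos(nξ)`, the discrete Fourier transform of
`u_n = e^{-ρ|n|^γ}`. -/
def Frho (γ ρ ξ : ℝ) : ℝ := ∑' n : ℤ, Real.exp (-ρ * |(n : ℝ)| ^ γ) * Real.cos (n * ξ)

/-- The symbol `f(x) = exp(-ρ|x|^γ)`. -/
def ff (γ ρ x : ℝ) : ℝ := Real.exp (-ρ * |x| ^ γ)

lemma sumS_step (s u d : ℝ) (hs : 1 < s) (hu : 0 < u) (hd : 0 < d) :
    (s - 1) * d * (u + d) ^ (-s) ≤ u ^ (1 - s) - (u + d) ^ (1 - s) := by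
  have ht : 0 < u + d := by linarith
  have h1 : u ^ (1 - s) = (u + d) ^ (1 - s) * ((u + d) / u) ^ (s - 1) := by
    rw [Real.div_rpow ht.le hu.le, show (1 - s) = -(s - 1) by ring, Real.rpow_neg hu.le,
      Real.rpow_neg ht.le]
    have := (Real.rpow_pos_of_pos ht (s-1)).ne'
    field_simp
  have h2 : (u + d) ^ (-s) = (u + d) ^ (1 - s) / (u + d) := by
    rw [← Real.rpow_sub_one ht.ne']; congr 1; ring
  have h3 : 1 + (s - 1) * (d / (u + d)) ≤ ((u + d) / u) ^ (s - 1) := by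
    rw [Real.rpow_def_of_pos (by positivity)]
    have h4 := Real.one_sub_inv_le_log_of_pos (x := (u + d) / u) (by positivity)
    have h5 : 1 - ((u + d) / u)⁻¹ = d / (u + d) := by
      field_simp; ring
    rw [h5] at h4
    have h6 := Real.add_one_le_exp (Real.log ((u + d) / u) * (s - 1))
    nlinarith
  have hp := Real.rpow_pos_of_pos ht (1 - s)
  rw [h1, h2]
  have := mul_le_mul_of_nonneg_left h3 hp.le
  calc _ = (u + d) ^ (1 - s) * (1 + (s - 1) * (d / (u + d))) - (u + d) ^ (1 - s) := by ring
    _ ≤ _ := by linarith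

lemma sumS (s M : ℝ) (hs : 1 < s) (hM : 0 < M) (N : ℕ) :
    ∑ k ∈ Finset.range N, (1 + ((k : ℝ) + 1) / M) ^ (-s) ≤ M / (s - 1) := by
  have h0 : ∑ k ∈ Finset.range N, (1 + ((k : ℝ) + 1) / M) ^ (-s)
      ≤ M / (s - 1) * (1 - (1 + (N : ℝ) / M) ^ (1 - s)) := by
    induction N with
    | zero => simp
    | succ N ih =>
      rw [Finset.sum_range_succ]
      have := sumS_step s (1 + (N : ℝ) / M) (1 / M) hs (by positivity) (by positivity)
      have e : 1 + (N : ℝ) / M + 1 / M = 1 + ((N : ℝ) + 1) / M := by ring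
      rw [e] at this
      push_cast
      have hs' : 0 < s - 1 := by linarith
      have h2 := mul_le_mul_of_nonneg_left this (show 0 ≤ M / (s - 1) by positivity)
      have e2 : M / (s - 1) * ((s - 1) * (1 / M) * (1 + ((N : ℝ) + 1) / M) ^ (-s))
        = (1 + ((N : ℝ) + 1) / M) ^ (-s) := by
        field_simp
      rw [e2] at h2
      linarith
  refine h0.trans ?_
  have hs' : 0 < s - 1 := by linarith
  have : 0 ≤ (1 + (N : ℝ) / M) ^ (1 - s) := by positivity
  have h3 : 0 ≤ M / (s - 1) := by positivity
  nlinarith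

lemma sumZ (s M : ℝ) (hs : 1 < s) (hM : 0 < M) :
    Summable (fun n : ℤ => (1 + |(n : ℝ)| / M) ^ (-s)) ∧
    ∑' n : ℤ, (1 + |(n : ℝ)| / M) ^ (-s) ≤ 1 + 2 * (M / (s - 1)) := by
  have hnn : ∀ k : ℕ, 0 ≤ (1 + ((k : ℝ) + 1) / M) ^ (-s) := fun k => by positivity
  have hS : Summable (fun k : ℕ => (1 + ((k : ℝ) + 1) / M) ^ (-s)) :=
    summable_of_sum_range_le hnn (sumS s M hs hM)
  have hT : ∑' k : ℕ, (1 + ((k : ℝ) + 1) / M) ^ (-s) ≤ M / (s - 1) :=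
    Real.tsum_le_of_sum_range_le hnn (sumS s M hs hM)
  set a := ∑' k : ℕ, (1 + ((k : ℝ) + 1) / M) ^ (-s) with ha
  have h1 : HasSum (fun k : ℕ => (1 + |((k : ℤ) : ℝ)| / M) ^ (-s)) (1 + a) := by
    rw [← hasSum_nat_add_iff' 1]
    simp only [Finset.range_one, Finset.sum_singleton]
    have e1 : (fun k : ℕ => (1 + |(((k + 1 : ℕ) : ℤ) : ℝ)| / M) ^ (-s)) =
        fun k : ℕ => (1 + ((k : ℝ) + 1) / M) ^ (-s) := by
      ext k; push_cast; rw [abs_of_nonneg (by positivity)]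
    rw [e1]
    have e2 : 1 + a - (1 + |(((0 : ℕ) : ℤ) : ℝ)| / M) ^ (-s) = a := by simp
    rw [e2]
    exact hS.hasSum
  have h2 : HasSum (fun k : ℕ => (1 + |((-((k : ℤ) + 1) : ℤ) : ℝ)| / M) ^ (-s)) a := by
    convert hS.hasSum using 1
    ext k; push_cast; rw [abs_neg, abs_of_nonneg (by positivity)]
  have h3 := HasSum.of_nat_of_neg_add_one (f := fun n : ℤ => (1 + |(n : ℝ)| / M) ^ (-s)) h1 h2
  exact ⟨h3.summable, by rw [h3.tsum_eq]; linarith⟩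

lemma exp_decay (γ : ℝ) (hγ : 0 < γ) : ∃ C : ℝ, 0 < C ∧ ∀ y : ℝ, 0 ≤ y →
    Real.exp (-y ^ γ) ≤ C * (1 + y) ^ (-(2 : ℝ)) := by
  obtain ⟨k, hk⟩ := exists_nat_ge (2 / γ)
  refine ⟨4 * (k.factorial + 1), by positivity, fun y hy => ?_⟩
  have h1 : (1 + y) ^ (-(2 : ℝ)) = ((1 + y) ^ 2)⁻¹ := by
    rw [Real.rpow_neg (by positivity)]; norm_num
  rw [h1, Real.exp_neg, ← div_eq_mul_inv, le_div_iff₀ (by positivity), inv_mul_le_iff₀ (Real.exp_pos _)]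
  have hf : (1 : ℝ) ≤ k.factorial := by exact_mod_cast Nat.one_le_iff_ne_zero.2 (Nat.factorial_ne_zero k)
  have hy0 : 0 ≤ y ^ γ := by positivity
  rcases le_total y 1 with h | h
  · have : 1 ≤ Real.exp (y ^ γ) := Real.one_le_exp hy0
    nlinarith
  · have h2 := Real.pow_div_factorial_le_exp (y ^ γ) hy0 k
    rw [div_le_iff₀ (by positivity)] at h2
    have h3 : y ^ 2 ≤ (y ^ γ) ^ k := by
      rw [← Real.rpow_natCast (y ^ γ), ← Real.rpow_mul hy, ← Real.rpow_natCast y 2]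
      apply Real.rpow_le_rpow_of_exponent_le h
      rw [div_le_iff₀ hγ] at hk; push_cast; linarith
    have := Real.exp_pos (y ^ γ)
    nlinarith

lemma ff_nonneg (γ ρ x : ℝ) : 0 ≤ ff γ ρ x := (Real.exp_pos _).le

lemma ff_neg (γ ρ x : ℝ) : ff γ ρ (-x) = ff γ ρ x := by simp [ff]

lemma ff_decay (γ : ℝ) (hγ : 0 < γ) : ∃ C : ℝ, 0 < C ∧ ∀ ρ : ℝ, 0 < ρ → ∀ x : ℝ,
    ff γ ρ x ≤ C * (1 + |x| / ρ ^ (-1 / γ)) ^ (-(2 : ℝ)) := by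
  obtain ⟨C, hC, h⟩ := exp_decay γ hγ
  refine ⟨C, hC, fun ρ hρ x => ?_⟩
  convert h (|x| / ρ ^ (-1 / γ)) (by positivity) using 1
  unfold ff
  rw [Real.div_rpow (by positivity) (by positivity), ← Real.rpow_mul hρ.le,
    show -1 / γ * γ = -1 by field_simp, Real.rpow_neg_one]
  congr 1; field_simp

lemma ff_summable (γ : ℝ) (hγ : 0 < γ) (ρ : ℝ) (hρ : 0 < ρ) :
    Summable (fun n : ℤ => ff γ ρ n) := by
  obtain ⟨C, hC, h⟩ := ff_decay γ hγ
  exact Summable.of_nonneg_of_le (fun n => ff_nonneg _ _ _) (fun n => h ρ hρ n)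
    ((sumZ 2 (ρ ^ (-1 / γ)) (by norm_num) (by positivity)).1.mul_left C)

lemma ffcos_summable (γ : ℝ) (hγ : 0 < γ) (ρ : ℝ) (hρ : 0 < ρ) (ξ : ℝ) :
    Summable (fun n : ℤ => ff γ ρ n * Real.cos (n * ξ)) := by
  refine Summable.of_norm_bounded (ff_summable γ hγ ρ hρ) (fun n => ?_)
  rw [norm_mul, Real.norm_of_nonneg (ff_nonneg _ _ _)]
  exact mul_le_of_le_one_right (ff_nonneg _ _ _) (Real.abs_cos_le_one _)

lemma Frho_eq (γ ρ ξ : ℝ) : Frho γ ρ ξ = ∑' n : ℤ, ff γ ρ n * Real.cos (n * ξ) := rfl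

lemma Frho_continuous (γ : ℝ) (hγ : 0 < γ) (ρ : ℝ) (hρ : 0 < ρ) : Continuous (Frho γ ρ) := by
  change Continuous (fun ξ => ∑' n : ℤ, ff γ ρ n * Real.cos (n * ξ))
  refine continuous_tsum (fun n => by fun_prop) (ff_summable γ hγ ρ hρ) (fun n ξ => ?_)
  rw [norm_mul, Real.norm_of_nonneg (ff_nonneg _ _ _)]
  exact mul_le_of_le_one_right (ff_nonneg _ _ _) (Real.abs_cos_le_one _)

lemma Frho_neg (γ ρ ξ : ℝ) : Frho γ ρ (-ξ) = Frho γ ρ ξ := by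
  simp [Frho]

lemma Frho_bound1 (γ : ℝ) (hγ : 0 < γ) : ∃ C : ℝ, 0 < C ∧ ∀ ρ : ℝ, 0 < ρ → ρ ≤ 1 → ∀ ξ : ℝ,
    |Frho γ ρ ξ| ≤ C * ρ ^ (-1 / γ) := by
  obtain ⟨C, hC, h⟩ := ff_decay γ hγ
  refine ⟨C * 3, by positivity, fun ρ hρ hρ1 ξ => ?_⟩
  obtain ⟨hs, ht⟩ := sumZ 2 (ρ ^ (-1 / γ)) (by norm_num) (by positivity)
  have h1 : |Frho γ ρ ξ| ≤ C * ∑' n : ℤ, (1 + |(n : ℝ)| / ρ ^ (-1 / γ)) ^ (-(2:ℝ)) := by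
    rw [Frho_eq, ← Real.norm_eq_abs, ← tsum_mul_left]
    refine tsum_of_norm_bounded (hs.mul_left C).hasSum (fun n => ?_)
    rw [norm_mul, Real.norm_of_nonneg (ff_nonneg _ _ _)]
    exact (mul_le_of_le_one_right (ff_nonneg _ _ _) (Real.abs_cos_le_one _)).trans (h ρ hρ n)
  have h2 : 1 ≤ ρ ^ (-1 / γ) := 
    Real.one_le_rpow_of_pos_of_le_one_of_nonpos hρ hρ1 (by rw [neg_div]; simp; positivity)
  calc _ ≤ _ := h1
    _ ≤ C * (3 * ρ ^ (-1 / γ)) := by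
      apply mul_le_mul_of_nonneg_left _ hC.le
      norm_num at ht ⊢
      linarith
    _ = _ := by ring


lemma diff_bound (g g' : ℝ → ℝ) (a m B : ℝ) (hm : 0 ≤ m)
    (h : ∀ x, a ≤ x → HasDerivAt g (g' x) x) (hB : ∀ x, a ≤ x → |g' x| ≤ B) :
    ∀ x, a ≤ x → |g (x + m) - g x| ≤ m * B := by
  intro x hx
  have := Convex.norm_image_sub_le_of_norm_hasDerivWithin_le (f := g) (f' := g') (s := Set.Ici a)
    (C := B) (x := x) (y := x + m) (fun y hy => (h y hy).hasDerivWithinAt) (fun y hy => hB y hy)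
    (convex_Ici a) hx (by simp only [Set.mem_Ici]; linarith)
  simp only [Real.norm_eq_abs, add_sub_cancel_left, abs_of_nonneg hm] at this
  linarith

lemma third_diff (g0 g1 g2 g3 : ℝ → ℝ) (a m B : ℝ) (hm : 0 ≤ m)
    (h0 : ∀ x, a ≤ x → HasDerivAt g0 (g1 x) x) (h1 : ∀ x, a ≤ x → HasDerivAt g1 (g2 x) x)
    (h2 : ∀ x, a ≤ x → HasDerivAt g2 (g3 x) x) (hB : ∀ x, a ≤ x → |g3 x| ≤ B) :
    ∀ x, a ≤ x → |g0 (x + m + m + m) - 3 * g0 (x + m + m) + 3 * g0 (x + m) - g0 x|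
      ≤ m ^ 3 * B := by
  have key : ∀ (u u' : ℝ → ℝ), (∀ x, a ≤ x → HasDerivAt u (u' x) x) →
      ∀ x, a ≤ x → HasDerivAt (fun x => u (x + m) - u x) (u' (x + m) - u' x) x := by
    intro u u' hu x hx
    exact ((hu (x + m) (by linarith)).comp_add_const x m).sub (hu x hx)
  have a1 := diff_bound g2 g3 a m B hm h2 hB
  have a2 := diff_bound _ _ a m (m * B) hm (key g1 g2 h1) a1
  have a3 := diff_bound _ _ a m (m * (m * B)) hm (key _ _ (key g0 g1 h0)) a2
  intro x hx
  convert a3 x hx using 1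
  · congr 1; ring
  · ring

lemma E_deriv (γ ρ a x : ℝ) (hx : 0 < x) :
    HasDerivAt (fun x : ℝ => x ^ a * Real.exp (-ρ * x ^ γ))
      (a * (x ^ (a - 1) * Real.exp (-ρ * x ^ γ))
        - ρ * γ * (x ^ (a + γ - 1) * Real.exp (-ρ * x ^ γ))) x := by
  have h1 := Real.hasDerivAt_rpow_const (x := x) (p := a) (Or.inl hx.ne')
  have h2 := Real.hasDerivAt_rpow_const (x := x) (p := γ) (Or.inl hx.ne')
  have h3 := h1.mul ((h2.const_mul (-ρ)).exp)
  refine h3.congr_deriv ?_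
  rw [show a + γ - 1 = a + (γ - 1) by ring, Real.rpow_add hx]
  ring

lemma exp_third_diff (γ : ℝ) (hγ0 : 0 < γ) (hγ2 : γ < 2) : ∃ C : ℝ, 0 < C ∧
    ∀ ρ a m : ℝ, 0 < ρ → 0 < a → 0 ≤ m → ∀ x, a ≤ x →
      |Real.exp (-ρ * (x + m + m + m) ^ γ) - 3 * Real.exp (-ρ * (x + m + m) ^ γ)
        + 3 * Real.exp (-ρ * (x + m) ^ γ) - Real.exp (-ρ * x ^ γ)|
      ≤ m ^ 3 * (C * ρ * a ^ (γ - 3)) := by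
  refine ⟨100, by norm_num, fun ρ a m hρ ha hm => ?_⟩
  set E : ℝ → ℝ → ℝ := fun b x => x ^ b * Real.exp (-ρ * x ^ γ) with hE
  have hd : ∀ b x, 0 < x → HasDerivAt (E b) (b * E (b - 1) x - ρ * γ * E (b + γ - 1) x) x :=
    fun b x hx => E_deriv γ ρ b x hx
  refine third_diff (fun x => Real.exp (-ρ * x ^ γ)) (fun x => - (ρ * γ) * E (γ - 1) x)
    (fun x => - (ρ * γ) * ((γ - 1) * E (γ - 1 - 1) x - ρ * γ * E (γ - 1 + γ - 1) x))
    (fun x => - (ρ * γ) * ((γ - 1) * ((γ - 1 - 1) * E (γ - 1 - 1 - 1) x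
        - ρ * γ * E (γ - 1 - 1 + γ - 1) x)
      - ρ * γ * ((γ - 1 + γ - 1) * E (γ - 1 + γ - 1 - 1) x
        - ρ * γ * E (γ - 1 + γ - 1 + γ - 1) x)))
    a m _ hm ?_ ?_ ?_ ?_
  · intro x hx
    have := hd 0 x (by linarith)
    simp only [hE, Real.rpow_zero, one_mul, zero_mul, zero_sub, zero_add] at this
    convert this using 1
    simp only [hE]; ring
  · intro x hx
    exact (hd _ x (by linarith)).const_mul _
  · intro x hx
    exact (((hd _ x (by linarith)).const_mul _).sub ((hd _ x (by linarith)).const_mul _)).const_mul _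
  · intro x hx
    have hx0 : 0 < x := by linarith
    have e1 : E (γ - 1 - 1 - 1) x = x ^ (γ - 3) * Real.exp (-ρ * x ^ γ) := by
      simp only [hE]; ring_nf
    have e2 : E (γ - 1 - 1 + γ - 1) x = x ^ (γ - 3) * x ^ γ * Real.exp (-ρ * x ^ γ) := by
      simp only [hE]; rw [← Real.rpow_add hx0]; ring_nf
    have e3 : E (γ - 1 + γ - 1 - 1) x = x ^ (γ - 3) * x ^ γ * Real.exp (-ρ * x ^ γ) := by
      simp only [hE]; rw [← Real.rpow_add hx0]; ring_nf
    have e4 : E (γ - 1 + γ - 1 + γ - 1) x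
        = x ^ (γ - 3) * x ^ γ * x ^ γ * Real.exp (-ρ * x ^ γ) := by
      simp only [hE]; rw [← Real.rpow_add hx0, ← Real.rpow_add hx0]; ring_nf
    rw [e1, e2, e3, e4]
    set t := ρ * x ^ γ with ht
    have ht0 : 0 < t := by positivity
    have het : Real.exp (-ρ * x ^ γ) = Real.exp (-t) := by rw [ht]; ring_nf
    rw [het]
    set e := Real.exp (-t) with hee
    have q0 : 0 < e := Real.exp_pos _
    have q1 : e ≤ 1 := Real.exp_le_one_iff.2 (by linarith)
    have q2 : t * e ≤ 1 := by
      have := Real.add_one_le_exp t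
      rw [hee, Real.exp_neg, ← div_eq_mul_inv, div_le_one (Real.exp_pos _)]; linarith
    have q3 : t * t * e ≤ 2 := by
      have := Real.quadratic_le_exp_of_nonneg ht0.le
      rw [hee, Real.exp_neg, ← div_eq_mul_inv, div_le_iff₀ (Real.exp_pos _)]; nlinarith
    have q2' : 0 < t * e := by positivity
    have q3' : 0 < t * t * e := by positivity
    have hX : x ^ (γ - 3) ≤ a ^ (γ - 3) := Real.rpow_le_rpow_of_nonpos ha hx (by linarith)
    have hX0 : 0 < x ^ (γ - 3) := by positivity
    have eq : -(ρ * γ) * ((γ - 1) * ((γ - 1 - 1) * (x ^ (γ - 3) * e)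
        - ρ * γ * (x ^ (γ - 3) * x ^ γ * e))
        - ρ * γ * ((γ - 1 + γ - 1) * (x ^ (γ - 3) * x ^ γ * e)
          - ρ * γ * (x ^ (γ - 3) * x ^ γ * x ^ γ * e)))
        = (ρ * x ^ (γ - 3)) * (-γ * ((γ - 1) * (γ - 2) * e - γ * (γ - 1) * (t * e)
          - γ * (2 * γ - 2) * (t * e) + γ * γ * (t * t * e))) := by
      rw [ht]; ring
    rw [eq, abs_mul, abs_of_pos (by positivity : 0 < ρ * x ^ (γ - 3))]
    have hb : |(-γ * ((γ - 1) * (γ - 2) * e - γ * (γ - 1) * (t * e)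
          - γ * (2 * γ - 2) * (t * e) + γ * γ * (t * t * e)))| ≤ 100 := by
      have g1 : |γ| ≤ 2 := by rw [abs_le]; constructor <;> linarith
      have g2 : |γ - 1| ≤ 1 := by rw [abs_le]; constructor <;> linarith
      have g3 : |γ - 2| ≤ 2 := by rw [abs_le]; constructor <;> linarith
      have g4 : |2 * γ - 2| ≤ 2 := by rw [abs_le]; constructor <;> linarith
      have b1 : |(γ - 1) * (γ - 2) * e| ≤ 1 * 2 * 1 := by
        rw [abs_mul, abs_mul, abs_of_pos q0]; gcongr
      have b2 : |γ * (γ - 1) * (t * e)| ≤ 2 * 1 * 1 := by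
        rw [abs_mul, abs_mul, abs_of_pos q2']; gcongr
      have b3 : |γ * (2 * γ - 2) * (t * e)| ≤ 2 * 2 * 1 := by
        rw [abs_mul, abs_mul, abs_of_pos q2']; gcongr
      have b4 : |γ * γ * (t * t * e)| ≤ 2 * 2 * 2 := by
        rw [abs_mul, abs_mul, abs_of_pos q3']; gcongr
      rw [abs_mul, abs_neg]
      have b5 : |(γ - 1) * (γ - 2) * e - γ * (γ - 1) * (t * e)
          - γ * (2 * γ - 2) * (t * e) + γ * γ * (t * t * e)| ≤ 16 := by
        rw [abs_le] at b1 b2 b3 b4 ⊢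
        constructor <;> linarith [b1.1, b1.2, b2.1, b2.2, b3.1, b3.2, b4.1, b4.2]
      have b6 := mul_le_mul g1 b5 (abs_nonneg _) (by norm_num)
      linarith
    calc _ ≤ ρ * x ^ (γ - 3) * 100 := by gcongr
      _ ≤ ρ * a ^ (γ - 3) * 100 := by gcongr
      _ = _ := by ring

/-- Fourth central difference with step `m`. -/
def d4 (γ ρ m x : ℝ) : ℝ :=
  6 * ff γ ρ x - 4 * ff γ ρ (x + m) - 4 * ff γ ρ (x - m) + ff γ ρ (x + 2 * m) + ff γ ρ (x - 2 * m)

lemma d4_neg (γ ρ m x : ℝ) : d4 γ ρ m (-x) = d4 γ ρ m x := by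
  unfold d4
  rw [ff_neg, show -x + m = -(x - m) by ring, show -x - m = -(x + m) by ring,
    show -x + 2 * m = -(x - 2 * m) by ring, show -x - 2 * m = -(x + 2 * m) by ring]
  simp only [ff_neg]; ring

lemma ff_near (γ ρ x R : ℝ) (hγ0 : 0 < γ) (hρ : 0 < ρ) (hR : |x| ≤ R) :
    |1 - ff γ ρ x| ≤ ρ * R ^ γ := by
  have h1 : |x| ^ γ ≤ R ^ γ := Real.rpow_le_rpow (abs_nonneg _) hR hγ0.le
  have h2 : 0 ≤ ρ * |x| ^ γ := by positivity
  have h3 := Real.add_one_le_exp (-ρ * |x| ^ γ)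
  have h4 : ff γ ρ x ≤ 1 := Real.exp_le_one_iff.2 (by linarith)
  rw [abs_of_nonneg (by linarith)]
  have h5 : ρ * |x| ^ γ ≤ ρ * R ^ γ := by gcongr
  unfold ff; linarith

lemma d4_bound (γ : ℝ) (hγ0 : 0 < γ) (hγ2 : γ < 2) : ∃ C : ℝ, 0 < C ∧
    ∀ ρ m x : ℝ, 0 < ρ → 0 < m →
      |d4 γ ρ m x| ≤ C * ρ * m ^ γ * (1 + |x| / m) ^ (-(3 - γ)) := by
  obtain ⟨C3, hC3, h3⟩ := exp_third_diff γ hγ0 hγ2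
  have main : ∀ ρ m x : ℝ, 0 < ρ → 0 < m → 0 ≤ x →
      |d4 γ ρ m x| ≤ (25600 + 128 * C3) * ρ * m ^ γ * (1 + |x| / m) ^ (-(3 - γ)) := by
    intro ρ m x hρ hm hx
    rw [abs_of_nonneg hx]
    have hP : 0 < (1 + x / m) ^ (-(3 - γ)) := by positivity
    have hmg : 0 < m ^ γ := by positivity
    rcases le_total x (3 * m) with h | h
    · have n1 := ff_near γ ρ x (5 * m) hγ0 hρ (by rw [abs_le]; constructor <;> linarith)
      have n2 := ff_near γ ρ (x + m) (5 * m) hγ0 hρ (by rw [abs_le]; constructor <;> linarith)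
      have n3 := ff_near γ ρ (x - m) (5 * m) hγ0 hρ (by rw [abs_le]; constructor <;> linarith)
      have n4 := ff_near γ ρ (x + 2 * m) (5 * m) hγ0 hρ (by rw [abs_le]; constructor <;> linarith)
      have n5 := ff_near γ ρ (x - 2 * m) (5 * m) hγ0 hρ (by rw [abs_le]; constructor <;> linarith)
      have b1 : |d4 γ ρ m x| ≤ 16 * (ρ * (5 * m) ^ γ) := by
        unfold d4
        rw [abs_le] at n1 n2 n3 n4 n5 ⊢
        constructor <;> linarith [n1.1, n1.2, n2.1, n2.2, n3.1, n3.2, n4.1, n4.2, n5.1, n5.2]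
      have b2 : (5 * m) ^ γ ≤ 25 * m ^ γ := by
        rw [Real.mul_rpow (by norm_num) hm.le]
        have : (5 : ℝ) ^ γ ≤ 5 ^ (2 : ℝ) := Real.rpow_le_rpow_of_exponent_le (by norm_num) hγ2.le
        norm_num at this
        gcongr
      have b3 : 1 ≤ 64 * (1 + x / m) ^ (-(3 - γ)) := by
        have c1 : (4 : ℝ) ^ (-(3 - γ)) ≤ (1 + x / m) ^ (-(3 - γ)) := by
          apply Real.rpow_le_rpow_of_nonpos (by positivity) _ (by linarith)
          have : x / m ≤ 3 := by rw [div_le_iff₀ hm]; exact h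
          linarith
        have c2 : (4 : ℝ) ^ (-(3 : ℝ)) ≤ (4 : ℝ) ^ (-(3 - γ)) :=
          Real.rpow_le_rpow_of_exponent_le (by norm_num) (by linarith)
        have c3 : (4 : ℝ) ^ (-(3 : ℝ)) = 1 / 64 := by
          rw [Real.rpow_neg (by norm_num)]; norm_num
        rw [c3] at c2
        have c4 := c2.trans c1
        clear c1 c2 c3
        linarith
      calc _ ≤ _ := b1
        _ ≤ 16 * (ρ * (25 * m ^ γ)) := by gcongr
        _ = 400 * (ρ * m ^ γ) * 1 := by ring
        _ ≤ 400 * (ρ * m ^ γ) * (64 * (1 + x / m) ^ (-(3 - γ))) := by gcongr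
        _ = 25600 * ρ * m ^ γ * (1 + x / m) ^ (-(3 - γ)) := by ring
        _ ≤ _ := by gcongr; linarith
    · have ha : 0 < x - 2 * m := by linarith
      have t1 := h3 ρ (x - 2 * m) m hρ ha hm.le (x - 2 * m) le_rfl
      have t2 := h3 ρ (x - 2 * m) m hρ ha hm.le (x - m) (by linarith)
      have e : ∀ y, 0 < y → ff γ ρ y = Real.exp (-ρ * y ^ γ) := fun y hy => by
        unfold ff; rw [abs_of_pos hy]
      have b1 : |d4 γ ρ m x| ≤ 2 * (m ^ 3 * (C3 * ρ * (x - 2 * m) ^ (γ - 3))) := by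
        unfold d4
        rw [e x (by linarith), e (x + m) (by linarith), e (x - m) (by linarith),
          e (x + 2 * m) (by linarith), e (x - 2 * m) (by linarith)]
        rw [show x - 2 * m + m + m + m = x + m by ring, show x - 2 * m + m + m = x by ring,
          show x - 2 * m + m = x - m by ring] at t1
        rw [show x - m + m + m + m = x + 2 * m by ring, show x - m + m + m = x + m by ring,
          show x - m + m = x by ring] at t2
        rw [abs_le] at t1 t2 ⊢
        constructor <;> linarith [t1.1, t1.2, t2.1, t2.2]
      have b2 : (x - 2 * m) ^ (γ - 3) ≤ 64 * m ^ (γ - 3) * (1 + x / m) ^ (-(3 - γ)) := by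
        have c1 : (x - 2 * m) ^ (γ - 3) ≤ ((1 / 4) * (m * (1 + x / m))) ^ (γ - 3) := by
          apply Real.rpow_le_rpow_of_nonpos (by positivity) _ (by linarith)
          have : m * (1 + x / m) = m + x := by field_simp
          rw [this]; linarith
        rw [Real.mul_rpow (by norm_num) (by positivity), Real.mul_rpow (by positivity)
          (by positivity)] at c1
        have c2 : (1 / 4 : ℝ) ^ (γ - 3) ≤ (1 / 4 : ℝ) ^ (-3 : ℝ) :=
          Real.rpow_le_rpow_of_exponent_ge (by norm_num) (by norm_num) (by linarith)
        have c3 : (1 / 4 : ℝ) ^ (-(3 : ℝ)) = 64 := by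
          rw [Real.rpow_neg (by norm_num)]; norm_num
        rw [c3] at c2
        rw [show -(3 - γ) = γ - 3 by ring]
        calc _ ≤ _ := c1
          _ ≤ 64 * (m ^ (γ - 3) * (1 + x / m) ^ (γ - 3)) := by gcongr
          _ = _ := by ring
      have b3 : m ^ 3 * m ^ (γ - 3) = m ^ γ := by
        rw [← Real.rpow_natCast m 3, ← Real.rpow_add hm]; congr 1; push_cast; ring
      calc _ ≤ _ := b1
        _ ≤ 2 * (m ^ 3 * (C3 * ρ * (64 * m ^ (γ - 3) * (1 + x / m) ^ (-(3 - γ))))) := by gcongr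
        _ = 128 * C3 * ρ * (m ^ 3 * m ^ (γ - 3)) * (1 + x / m) ^ (-(3 - γ)) := by ring
        _ = 128 * C3 * ρ * m ^ γ * (1 + x / m) ^ (-(3 - γ)) := by rw [b3]
        _ ≤ _ := by gcongr; linarith
  refine ⟨25600 + 128 * C3, by positivity, fun ρ m x hρ hm => ?_⟩
  rcases le_total 0 x with h | h
  · exact main ρ m x hρ hm h
  · have := main ρ m (-x) hρ hm (by linarith)
    rwa [d4_neg, abs_neg] at this

lemma d4_identity (γ : ℝ) (hγ : 0 < γ) (ρ : ℝ) (hρ : 0 < ρ) (m : ℕ) (ξ : ℝ) :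
    (2 - 2 * Real.cos (m * ξ)) ^ 2 * Frho γ ρ ξ = ∑' n : ℤ, d4 γ ρ m n * Real.cos (n * ξ) := by
  have hsh : ∀ j : ℤ, HasSum (fun n : ℤ => ff γ ρ (n + j) * Real.cos (n * ξ))
      (∑' n : ℤ, ff γ ρ n * Real.cos ((n - j) * ξ)) := by
    intro j
    have hs : Summable (fun n : ℤ => ff γ ρ n * Real.cos ((n - j) * ξ)) := by
      refine Summable.of_norm_bounded (ff_summable γ hγ ρ hρ) (fun n => ?_)
      rw [norm_mul, Real.norm_of_nonneg (ff_nonneg _ _ _)]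
      exact mul_le_of_le_one_right (ff_nonneg _ _ _) (Real.abs_cos_le_one _)
    have := (Equiv.addRight j).hasSum_iff.2 hs.hasSum
    convert this using 1
    ext n; simp
  have hs : ∀ j : ℤ, Summable (fun n : ℤ => ff γ ρ n * Real.cos ((n - j) * ξ)) := by
    intro j
    refine Summable.of_norm_bounded (ff_summable γ hγ ρ hρ) (fun n => ?_)
    rw [norm_mul, Real.norm_of_nonneg (ff_nonneg _ _ _)]
    exact mul_le_of_le_one_right (ff_nonneg _ _ _) (Real.abs_cos_le_one _)
  have h1 := ((((hsh 0).mul_left 6).sub ((hsh m).mul_left 4)).sub ((hsh (-m)).mul_left 4)).add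
    (hsh (2 * m)) |>.add (hsh (-(2 * m)))
  have h2 := ((((hs 0).hasSum.mul_left 6).sub ((hs m).hasSum.mul_left 4)).sub
    ((hs (-m)).hasSum.mul_left 4)).add
    (hs (2 * m)).hasSum |>.add (hs (-(2 * m))).hasSum
  refine Eq.trans ?_ (h1.tsum_eq.symm.trans (tsum_congr fun n => ?_))
  swap
  · unfold d4
    push_cast
    rw [add_zero, ← sub_eq_add_neg, ← sub_eq_add_neg]
    ring
  rw [Frho_eq, ← tsum_mul_left, ← h2.tsum_eq]
  congr 1
  ext n
  push_cast
  have c1 : Real.cos (((n:ℝ) - m) * ξ) + Real.cos ((n - -(m:ℝ)) * ξ) =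
      2 * Real.cos (n * ξ) * Real.cos (m * ξ) := by
    rw [sub_mul, sub_mul, neg_mul, sub_neg_eq_add, Real.cos_add, Real.cos_sub]; ring
  have c2 : Real.cos (((n:ℝ) - 2 * m) * ξ) + Real.cos ((n - -(2 * m:ℝ)) * ξ) =
      2 * Real.cos (n * ξ) * (2 * Real.cos (m * ξ) ^ 2 - 1) := by
    rw [sub_mul, sub_mul, neg_mul, sub_neg_eq_add, Real.cos_add, Real.cos_sub, mul_assoc 2 (m : ℝ),
      Real.cos_two_mul]; ring
  rw [sub_zero]
  linear_combination (-(4 * ff γ ρ n)) * (-c1) + ff γ ρ n * (-c2)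

lemma Frho_bound2 (γ : ℝ) (hγ0 : 0 < γ) (hγ2 : γ < 2) : ∃ C : ℝ, 0 < C ∧
    ∀ ρ ξ : ℝ, 0 < ρ → 0 < ξ → ξ ≤ Real.pi → |Frho γ ρ ξ| ≤ C * (ρ * ξ ^ (-1 - γ)) := by
  obtain ⟨C, hC, h⟩ := d4_bound γ hγ0 hγ2
  have hg : 0 < 3 - γ - 1 := by linarith
  have hpi := Real.pi_pos
  refine ⟨C * (1 + 2 / (3 - γ - 1)) * Real.pi ^ (1 + γ), by positivity, fun ρ ξ hρ hξ hξπ => ?_⟩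
  set m : ℕ := ⌊Real.pi / ξ⌋₊ with hm
  have hm1 : 1 ≤ m := Nat.le_floor (by rw [Nat.cast_one, one_le_div hξ]; exact hξπ)
  have hm1' : (1 : ℝ) ≤ m := by exact_mod_cast hm1
  have hm2 : (m : ℝ) ≤ Real.pi / ξ := Nat.floor_le (by positivity)
  have hm3 : Real.pi / ξ < m + 1 := Nat.lt_floor_add_one _
  have hm0 : (0 : ℝ) < m := by linarith
  rw [le_div_iff₀ hξ] at hm2
  rw [div_lt_iff₀ hξ] at hm3
  have hcos : Real.cos (m * ξ) ≤ 0 := by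
    apply Real.cos_nonpos_of_pi_div_two_le_of_le <;> nlinarith
  have hid := d4_identity γ hγ0 ρ hρ m ξ
  obtain ⟨hs, ht⟩ := sumZ (3 - γ) m (by linarith) hm0
  have h1 : |∑' n : ℤ, d4 γ ρ m n * Real.cos (n * ξ)| ≤
      C * ρ * m ^ γ * ∑' n : ℤ, (1 + |(n : ℝ)| / m) ^ (-(3 - γ)) := by
    rw [← Real.norm_eq_abs, ← tsum_mul_left]
    refine tsum_of_norm_bounded (hs.mul_left _).hasSum (fun n => ?_)
    rw [norm_mul]
    exact (mul_le_of_le_one_right (norm_nonneg _) (Real.abs_cos_le_one _)).trans (h ρ m n hρ hm0)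
  rw [← hid, abs_mul, abs_of_nonneg (sq_nonneg _)] at h1
  have h2 : |Frho γ ρ ξ| ≤ (2 - 2 * Real.cos (m * ξ)) ^ 2 * |Frho γ ρ ξ| := by
    apply le_mul_of_one_le_left (abs_nonneg _)
    nlinarith
  have h3 : (1 : ℝ) + 2 * (m / (3 - γ - 1)) ≤ m * (1 + 2 / (3 - γ - 1)) := by
    have : (m : ℝ) * (1 + 2 / (3 - γ - 1)) = m + 2 * (m / (3 - γ - 1)) := by ring
    linarith
  have h4 : (m : ℝ) ^ γ * m ≤ Real.pi ^ (1 + γ) * ξ ^ (-1 - γ) := by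
    rw [← Real.rpow_add_one hm0.ne']
    have : (m : ℝ) ≤ Real.pi / ξ := by rwa [le_div_iff₀ hξ]
    calc (m : ℝ) ^ (γ + 1) ≤ (Real.pi / ξ) ^ (γ + 1) := by gcongr
      _ = _ := by
        rw [Real.div_rpow hpi.le hξ.le, show -1 - γ = -(γ + 1) by ring, Real.rpow_neg hξ.le,
          add_comm 1 γ]; rfl
  calc _ ≤ _ := h2
    _ ≤ _ := h1
    _ ≤ C * ρ * m ^ γ * (m * (1 + 2 / (3 - γ - 1))) := by
      gcongr; exact ht.trans h3
    _ = C * (1 + 2 / (3 - γ - 1)) * ρ * (m ^ γ * m) := by ring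
    _ ≤ C * (1 + 2 / (3 - γ - 1)) * ρ * (Real.pi ^ (1 + γ) * ξ ^ (-1 - γ)) := by gcongr
    _ = _ := by ring


lemma int_cos (j : ℤ) : ∫ ξ in (-Real.pi)..Real.pi, Real.cos (j * ξ) =
    if j = 0 then 2 * Real.pi else 0 := by
  split_ifs with h
  · subst h; simp; ring
  · have hj : (j : ℝ) ≠ 0 := by exact_mod_cast h
    rw [intervalIntegral.integral_comp_mul_left (fun x => Real.cos x) hj, integral_cos]
    simp [Real.sin_int_mul_pi]

lemma int_cos_cos (n k : ℤ) : ∫ ξ in (-Real.pi)..Real.pi, Real.cos (n * ξ) * Real.cos (k * ξ) =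
    (if n = k then Real.pi else 0) + (if n = -k then Real.pi else 0) := by
  have e : ∀ ξ : ℝ, Real.cos (n * ξ) * Real.cos (k * ξ) =
      (1 / 2) * Real.cos ((n - k : ℤ) * ξ) + (1 / 2) * Real.cos ((n + k : ℤ) * ξ) := by
    intro ξ
    push_cast
    rw [sub_mul, add_mul, Real.cos_add, Real.cos_sub]; ring
  simp_rw [e]
  rw [intervalIntegral.integral_add (Continuous.intervalIntegrable (by fun_prop) _ _)
    (Continuous.intervalIntegrable (by fun_prop) _ _), intervalIntegral.integral_const_mul,
    intervalIntegral.integral_const_mul, int_cos, int_cos]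
  have h1 : (n - k = 0) ↔ n = k := sub_eq_zero
  have h2 : (n + k = 0) ↔ n = -k := add_eq_zero_iff_eq_neg
  simp only [h1, h2]
  split_ifs <;> ring

lemma int_series (a : ℤ → ℝ) (ha : Summable (fun n => |a n|)) (hev : ∀ n, a (-n) = a n) (k : ℤ) :
    ∫ ξ in (-Real.pi)..Real.pi, (∑' n : ℤ, a n * Real.cos (n * ξ)) * Real.cos (k * ξ) =
      2 * Real.pi * a k := by
  have hb : ∀ (n : ℤ) (ξ : ℝ), ‖a n * Real.cos (n * ξ) * Real.cos (k * ξ)‖ ≤ |a n| := by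
    intro n ξ
    rw [norm_mul, norm_mul, mul_assoc]
    apply mul_le_of_le_one_right (abs_nonneg _)
    exact mul_le_one₀ (Real.abs_cos_le_one _) (norm_nonneg _) (Real.abs_cos_le_one _)
  have hb' : ∀ (n : ℤ) (ξ : ℝ), ‖a n * Real.cos (n * ξ)‖ ≤ |a n| := by
    intro n ξ
    rw [norm_mul]
    exact mul_le_of_le_one_right (abs_nonneg _) (Real.abs_cos_le_one _)
  have h := intervalIntegral.hasSum_integral_of_dominated_convergence
    (μ := MeasureTheory.volume) (a := -Real.pi) (b := Real.pi)
    (F := fun (n : ℤ) ξ => a n * Real.cos (n * ξ) * Real.cos (k * ξ))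
    (f := fun ξ => (∑' n : ℤ, a n * Real.cos (n * ξ)) * Real.cos (k * ξ))
    (fun n _ => |a n|)
    (fun n => (Continuous.aestronglyMeasurable (by fun_prop)))
    (fun n => Filter.Eventually.of_forall fun ξ _ => hb n ξ)
    (Filter.Eventually.of_forall fun ξ _ => ha)
    (by simp)
    (Filter.Eventually.of_forall fun ξ _ =>
      ((Summable.of_norm_bounded ha (fun n => hb' n ξ)).hasSum.mul_right _))
  have h2 : ∀ n : ℤ, ∫ ξ in (-Real.pi)..Real.pi, a n * Real.cos (n * ξ) * Real.cos (k * ξ) =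
      (if n = k then Real.pi * a k else 0) + (if n = -k then Real.pi * a k else 0) := by
    intro n
    simp_rw [mul_assoc]
    rw [intervalIntegral.integral_const_mul, int_cos_cos]
    have h1 : a n * (if n = k then Real.pi else 0) = if n = k then Real.pi * a k else 0 := by
      split_ifs with h
      · rw [h]; ring
      · ring
    have h2 : a n * (if n = -k then Real.pi else 0) = if n = -k then Real.pi * a k else 0 := by
      split_ifs with h
      · rw [h, hev]; ring
      · ring
    rw [mul_add, h1, h2]
  simp_rw [h2] at h
  have h3 := (hasSum_ite_eq k (Real.pi * a k)).add (hasSum_ite_eq (-k) (Real.pi * a k))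
  rw [h.unique h3]; ring

lemma int_T_sq (L : ℕ) : ∫ ξ in (-Real.pi)..Real.pi,
    (∑ n ∈ Finset.range L, Real.cos ((n : ℤ) * ξ)) ^ 2 ≤ 2 * Real.pi * L := by
  have e : ∀ ξ : ℝ, (∑ n ∈ Finset.range L, Real.cos ((n : ℤ) * ξ)) ^ 2 =
    ∑ n ∈ Finset.range L, ∑ k ∈ Finset.range L, Real.cos ((n : ℤ) * ξ) * Real.cos ((k : ℤ) * ξ) := by
    intro ξ; rw [sq, Finset.sum_mul_sum]
  simp_rw [e]
  rw [intervalIntegral.integral_finsetSum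
    (fun n _ => Continuous.intervalIntegrable (by fun_prop) _ _)]
  have h : ∀ n ∈ Finset.range L, ∫ ξ in (-Real.pi)..Real.pi,
      ∑ k ∈ Finset.range L, Real.cos ((n : ℤ) * ξ) * Real.cos ((k : ℤ) * ξ) ≤ 2 * Real.pi := by
    intro n hn
    rw [intervalIntegral.integral_finsetSum
      (fun n _ => Continuous.intervalIntegrable (by fun_prop) _ _)]
    have h1 : ∀ k ∈ Finset.range L, ∫ ξ in (-Real.pi)..Real.pi,
        Real.cos ((n : ℤ) * ξ) * Real.cos ((k : ℤ) * ξ) ≤ if n = k then 2 * Real.pi else 0 := by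
      intro k hk
      rw [int_cos_cos]
      have := Real.pi_pos
      by_cases h : n = k
      · subst h; simp only [if_true]; split_ifs <;> linarith
      · have h1 : ¬ ((n : ℤ) = k) := by exact_mod_cast h
        have h2 : ¬ ((n : ℤ) = -k) := by omega
        simp [h, h2]
    refine (Finset.sum_le_sum h1).trans ?_
    rw [Finset.sum_ite_eq]; simp [hn]
  refine (Finset.sum_le_sum h).trans ?_
  simp; linarith

lemma exp_neg_le (y : ℝ) (hy : 0 ≤ y) : Real.exp (-y) ≤ 1 - y + y ^ 2 / 2 := by
  have h := Real.quadratic_le_exp_of_nonneg hy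
  rw [Real.exp_neg, inv_le_iff_one_le_mul₀ (Real.exp_pos _)]
  have h2 : 0 < 1 - y + y ^ 2 / 2 := by nlinarith [sq_nonneg (y - 1)]
  have h3 := mul_le_mul_of_nonneg_left h h2.le
  nlinarith [sq_nonneg (y ^ 2)]

lemma bracket (γ : ℝ) (hγ0 : 0 < γ) (hγ2 : γ < 2) : ∃ θ κ : ℝ, 0 < θ ∧ θ ≤ 1 ∧ 0 < κ ∧
    ∀ r : ℝ, 0 ≤ r → r ≤ θ →
      κ ≤ 4 * (1 + r) ^ γ + 4 * (1 - r) ^ γ - 6 * r ^ γ - (2 + r) ^ γ - (2 - r) ^ γ := by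
  set G : ℝ → ℝ := fun r =>
    4 * (1 + r) ^ γ + 4 * (1 - r) ^ γ - 6 * r ^ γ - (2 + r) ^ γ - (2 - r) ^ γ with hG
  have hc : Continuous G := by
    have h : ∀ u : ℝ → ℝ, Continuous u → Continuous fun r => u r ^ γ :=
      fun u hu => hu.rpow_const (fun _ => Or.inr hγ0.le)
    have h1 := h (fun r => 1 + r) (by fun_prop)
    have h2 := h (fun r => 1 - r) (by fun_prop)
    have h3 := h (fun r => r) (by fun_prop)
    have h4 := h (fun r => 2 + r) (by fun_prop)
    have h5 := h (fun r => 2 - r) (by fun_prop)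
    simp only [hG]
    fun_prop
  have h0 : 0 < G 0 := by
    have : (2 : ℝ) ^ γ < 2 ^ (2 : ℝ) := Real.rpow_lt_rpow_of_exponent_lt (by norm_num) hγ2
    norm_num at this
    simp only [hG, add_zero, sub_zero, Real.one_rpow, Real.zero_rpow hγ0.ne']
    linarith
  have hev : ∀ᶠ r in nhds (0 : ℝ), G 0 / 2 < G r :=
    hc.continuousAt.eventually_const_lt (by linarith)
  obtain ⟨ε, hε, hball⟩ := Metric.eventually_nhds_iff.1 hev
  refine ⟨min (ε / 2) 1, G 0 / 2, by positivity, min_le_right _ _, by positivity, ?_⟩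
  intro r hr hr2
  refine (hball ?_).le
  rw [Real.dist_eq, sub_zero, abs_of_nonneg hr]
  have := min_le_left (ε / 2) 1
  linarith

lemma d4_lower (γ : ℝ) (hγ0 : 0 < γ) (hγ2 : γ < 2) : ∃ θ κ a : ℝ, 0 < θ ∧ θ ≤ 1 ∧ 0 < κ ∧ 0 < a ∧
    ∀ ρ m x : ℝ, 0 < ρ → 0 < m → ρ * m ^ γ ≤ a → 0 ≤ x → x ≤ θ * m →
      κ * (ρ * m ^ γ) ≤ d4 γ ρ m x := by
  obtain ⟨θ, κ, hθ, hθ1, hκ, h⟩ := bracket γ hγ0 hγ2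
  refine ⟨θ, κ / 2, κ / 128, hθ, hθ1, by positivity, by positivity, ?_⟩
  intro ρ m x hρ hm ha hx hxθ
  have hxm : x ≤ m := by nlinarith
  have hr := h (x / m) (by positivity) (by rw [div_le_iff₀ hm]; exact hxθ)
  set y := ρ * m ^ γ with hy
  have hy0 : 0 < y := by positivity
  have sc : ∀ z : ℝ, 0 ≤ z → ρ * z ^ γ = y * (z / m) ^ γ := by
    intro z hz
    rw [hy, Real.div_rpow hz hm.le]
    have : 0 < m ^ γ := by positivity
    field_simp
  have low : ∀ z : ℝ, 0 ≤ z → 1 - y * (z / m) ^ γ ≤ ff γ ρ z := by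
    intro z hz
    unfold ff
    rw [abs_of_nonneg hz, ← sc z hz]
    have := Real.add_one_le_exp (-ρ * z ^ γ)
    linarith
  have up : ∀ z : ℝ, 0 ≤ z → z ≤ 2 * m → ff γ ρ z ≤ 1 - y * (z / m) ^ γ + 8 * y ^ 2 := by
    intro z hz hz2
    unfold ff
    rw [abs_of_nonneg hz, neg_mul, sc z hz]
    have h1 := exp_neg_le (y * (z / m) ^ γ) (by positivity)
    have h2 : (z / m) ^ γ ≤ 4 := by
      calc (z / m) ^ γ ≤ 2 ^ γ := by
            apply Real.rpow_le_rpow (by positivity) _ hγ0.le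
            rw [div_le_iff₀ hm]; exact hz2
        _ ≤ 2 ^ (2 : ℝ) := Real.rpow_le_rpow_of_exponent_le (by norm_num) hγ2.le
        _ = 4 := by norm_num
    have h3 : (y * (z / m) ^ γ) ^ 2 ≤ (y * 4) ^ 2 := by gcongr
    nlinarith
  have l1 := low x hx
  have l2 := low (x + 2 * m) (by linarith)
  have l3 := low (2 * m - x) (by linarith)
  have u1 := up (x + m) (by linarith) (by linarith)
  have u2 := up (m - x) (by linarith) (by linarith)
  have e1 : ff γ ρ (x - m) = ff γ ρ (m - x) := by rw [← ff_neg]; ring_nf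
  have e2 : ff γ ρ (x - 2 * m) = ff γ ρ (2 * m - x) := by rw [← ff_neg]; ring_nf
  rw [show (x + m) / m = 1 + x / m by field_simp; ring] at u1
  rw [show (m - x) / m = 1 - x / m by field_simp] at u2
  rw [show (x + 2 * m) / m = 2 + x / m by field_simp; ring] at l2
  rw [show (2 * m - x) / m = 2 - x / m by field_simp] at l3
  unfold d4
  rw [e1, e2]
  have hr2 := mul_le_mul_of_nonneg_left hr hy0.le
  have hyy : 64 * y ^ 2 ≤ κ / 2 * y := by nlinarith
  linarith

lemma parseval_lower (γ : ℝ) (hγ0 : 0 < γ) (hγ2 : γ < 2) : ∃ c a : ℝ, 0 < c ∧ 0 < a ∧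
    ∀ (ρ : ℝ) (m : ℕ), 0 < ρ → 1 ≤ m → ρ * (m : ℝ) ^ γ ≤ a →
      c * ρ ^ 2 * (m : ℝ) ^ (1 + 2 * γ) ≤
        ∫ ξ in (-Real.pi)..Real.pi, (2 - 2 * Real.cos (m * ξ)) ^ 4 * Frho γ ρ ξ ^ 2 := by
  obtain ⟨θ, κ, a, hθ, hθ1, hκ, ha, h⟩ := d4_lower γ hγ0 hγ2
  obtain ⟨C, hC, hd4⟩ := d4_bound γ hγ0 hγ2
  have hpi := Real.pi_pos
  refine ⟨2 * Real.pi * κ ^ 2 * θ, a, by positivity, ha, ?_⟩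
  intro ρ m hρ hm hma
  have hm0 : (0 : ℝ) < m := by exact_mod_cast hm
  set L : ℕ := ⌊θ * m⌋₊ + 1 with hL
  set y := ρ * (m : ℝ) ^ γ with hy
  have hy0 : 0 < y := by positivity
  have hFc := Frho_continuous γ hγ0 ρ hρ
  set g : ℝ → ℝ := fun ξ => (2 - 2 * Real.cos (m * ξ)) ^ 2 * Frho γ ρ ξ with hg
  have hgc : Continuous g := by simp only [hg]; fun_prop
  set T : ℝ → ℝ := fun ξ => ∑ n ∈ Finset.range L, Real.cos ((n : ℤ) * ξ) with hT
  have hTc : Continuous T := by simp only [hT]; fun_prop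
  have hsum : Summable (fun n : ℤ => |d4 γ ρ m n|) :=
    Summable.of_nonneg_of_le (fun n => abs_nonneg _) (fun n => hd4 ρ m n hρ hm0)
      ((sumZ (3 - γ) m (by linarith) hm0).1.mul_left _)
  have hgT : 2 * Real.pi * L * (κ * y) ≤ ∫ ξ in (-Real.pi)..Real.pi, g ξ * T ξ := by
    simp only [hT, Finset.mul_sum]
    rw [intervalIntegral.integral_finsetSum
      (fun n _ => Continuous.intervalIntegrable (by fun_prop) _ _)]
    have h1 : ∀ n ∈ Finset.range L, 2 * Real.pi * (κ * y) ≤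
        ∫ ξ in (-Real.pi)..Real.pi, g ξ * Real.cos ((n : ℤ) * ξ) := by
      intro n hn
      have h2 := int_series (fun n : ℤ => d4 γ ρ m n) hsum
        (fun n => by push_cast; exact d4_neg _ _ _ _) n
      have h3 : ∀ ξ, g ξ = ∑' n : ℤ, d4 γ ρ m n * Real.cos (n * ξ) :=
        fun ξ => d4_identity γ hγ0 ρ hρ m ξ
      simp_rw [h3]
      rw [h2]
      apply mul_le_mul_of_nonneg_left _ (by positivity)
      apply h ρ m _ hρ hm0 hma
      · simp
      · have : n ≤ ⌊θ * m⌋₊ := by rw [Finset.mem_range, hL] at hn; omega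
        push_cast
        exact (Nat.cast_le.2 this).trans (Nat.floor_le (by positivity))
    have h4 := Finset.sum_le_sum h1
    simp only [Finset.sum_const, Finset.card_range, nsmul_eq_mul] at h4
    refine le_trans (le_of_eq ?_) h4
    ring
  have hTT := int_T_sq L
  have hineq : ∫ ξ in (-Real.pi)..Real.pi, (2 * (κ * y) * (g ξ * T ξ) - (κ * y) ^ 2 * T ξ ^ 2) ≤
      ∫ ξ in (-Real.pi)..Real.pi, (2 - 2 * Real.cos (m * ξ)) ^ 4 * Frho γ ρ ξ ^ 2 := by
    apply intervalIntegral.integral_mono_on (by linarith)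
      (Continuous.intervalIntegrable (by fun_prop) _ _)
      (Continuous.intervalIntegrable (by fun_prop) _ _)
    intro ξ _
    have : (2 - 2 * Real.cos (m * ξ)) ^ 4 * Frho γ ρ ξ ^ 2 = g ξ ^ 2 := by simp only [hg]; ring
    rw [this]
    nlinarith [sq_nonneg (g ξ - κ * y * T ξ)]
  rw [intervalIntegral.integral_sub (Continuous.intervalIntegrable (by fun_prop) _ _)
    (Continuous.intervalIntegrable (by fun_prop) _ _), intervalIntegral.integral_const_mul,
    intervalIntegral.integral_const_mul] at hineq
  have hLm : θ * m ≤ L := by rw [hL]; push_cast; exact (Nat.lt_floor_add_one _).le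
  have e : (m : ℝ) ^ (1 + 2 * γ) = m * ((m : ℝ) ^ γ) ^ 2 := by
    rw [Real.rpow_add hm0, Real.rpow_one, ← Real.rpow_natCast, ← Real.rpow_mul hm0.le]
    congr 2; push_cast; ring
  have k1 := mul_le_mul_of_nonneg_left hgT (show 0 ≤ 2 * (κ * y) by positivity)
  have k2 := mul_le_mul_of_nonneg_left hTT (show 0 ≤ (κ * y) ^ 2 by positivity)
  calc _ = 2 * Real.pi * (κ * y) ^ 2 * (θ * m) := by rw [e, hy]; ring
    _ ≤ 2 * Real.pi * (κ * y) ^ 2 * L := by gcongr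
    _ ≤ _ := by
      refine le_trans ?_ hineq
      linarith


/-- The weighted integral. -/
def II (γ β ρ : ℝ) : ℝ := ∫ ξ in (-Real.pi)..Real.pi, |ξ| ^ β * Frho γ ρ ξ ^ 2

lemma w_int0 (γ β ρ b : ℝ) (hγ0 : 0 < γ) (hβ : -1 < β) (hρ : 0 < ρ) :
    IntervalIntegrable (fun ξ : ℝ => ξ ^ β * Frho γ ρ ξ ^ 2) MeasureTheory.volume 0 b :=
  (intervalIntegral.intervalIntegrable_rpow' hβ).mul_continuousOn
    ((Frho_continuous γ hγ0 ρ hρ).pow 2).continuousOn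

lemma w_int1 (γ β ρ : ℝ) (hγ0 : 0 < γ) (hβ : -1 < β) (hρ : 0 < ρ) :
    IntervalIntegrable (fun ξ : ℝ => |ξ| ^ β * Frho γ ρ ξ ^ 2) MeasureTheory.volume 0 Real.pi := by
  refine (w_int0 γ β ρ Real.pi hγ0 hβ hρ).congr ?_
  intro ξ hξ
  rw [Set.uIoc_of_le Real.pi_pos.le] at hξ
  simp only [abs_of_pos hξ.1]

lemma w_int2 (γ β ρ : ℝ) (hγ0 : 0 < γ) (hβ : -1 < β) (hρ : 0 < ρ) :
    IntervalIntegrable (fun ξ : ℝ => |ξ| ^ β * Frho γ ρ ξ ^ 2) MeasureTheory.volume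
      (-Real.pi) 0 := by
  have h := (w_int1 γ β ρ hγ0 hβ hρ).symm
  rw [IntervalIntegrable.iff_comp_neg] at h
  simpa [Frho_neg] using h

lemma w_int (γ β ρ : ℝ) (hγ0 : 0 < γ) (hβ : -1 < β) (hρ : 0 < ρ) :
    IntervalIntegrable (fun ξ : ℝ => |ξ| ^ β * Frho γ ρ ξ ^ 2) MeasureTheory.volume
      (-Real.pi) Real.pi := (w_int2 γ β ρ hγ0 hβ hρ).trans (w_int1 γ β ρ hγ0 hβ hρ)

lemma II_even (γ β ρ : ℝ) (hγ0 : 0 < γ) (hβ : -1 < β) (hρ : 0 < ρ) :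
    II γ β ρ = 2 * ∫ ξ in (0 : ℝ)..Real.pi, ξ ^ β * Frho γ ρ ξ ^ 2 := by
  unfold II
  rw [← intervalIntegral.integral_add_adjacent_intervals (w_int2 γ β ρ hγ0 hβ hρ)
    (w_int1 γ β ρ hγ0 hβ hρ)]
  have h1 : ∫ ξ in (-Real.pi)..0, |ξ| ^ β * Frho γ ρ ξ ^ 2 =
      ∫ ξ in (0 : ℝ)..Real.pi, |ξ| ^ β * Frho γ ρ ξ ^ 2 := by
    have := intervalIntegral.integral_comp_neg (a := -Real.pi) (b := 0)
      (fun ξ => |ξ| ^ β * Frho γ ρ ξ ^ 2)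
    simpa [Frho_neg] using this
  have h2 : ∫ ξ in (0 : ℝ)..Real.pi, |ξ| ^ β * Frho γ ρ ξ ^ 2 =
      ∫ ξ in (0 : ℝ)..Real.pi, ξ ^ β * Frho γ ρ ξ ^ 2 := by
    apply intervalIntegral.integral_congr
    intro ξ hξ
    rw [Set.uIcc_of_le Real.pi_pos.le] at hξ
    simp only [abs_of_nonneg hξ.1]
  rw [h1, h2]; ring

lemma upper_raw (γ β : ℝ) (hγ0 : 0 < γ) (hγ2 : γ < 2) (hβ : -1 < β) : ∃ C : ℝ, 0 < C ∧
    ∀ ρ : ℝ, 0 < ρ → ρ ≤ 1 → II γ β ρ ≤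
      C * (ρ ^ ((β - 1) / γ) + ρ ^ 2 * ∫ ξ in (ρ ^ (1 / γ))..Real.pi, ξ ^ (β - 2 - 2 * γ)) := by
  obtain ⟨C1, hC1, h1⟩ := Frho_bound1 γ hγ0
  obtain ⟨C2, hC2, h2⟩ := Frho_bound2 γ hγ0 hγ2
  have hb1 : 0 < β + 1 := by linarith
  refine ⟨2 * (C1 ^ 2 / (β + 1) + C2 ^ 2), by positivity, ?_⟩
  intro ρ hρ hρ1
  set h := ρ ^ (1 / γ) with hh
  have hh0 : 0 < h := by positivity
  have hh1 : h ≤ 1 := Real.rpow_le_one hρ.le hρ1 (by positivity)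
  have hpi := Real.pi_gt_three
  have hhpi : h ≤ Real.pi := by linarith
  have hinv : ρ ^ (-1 / γ) = h⁻¹ := by rw [hh, neg_div, Real.rpow_neg hρ.le]
  have A : ∫ ξ in (0 : ℝ)..h, ξ ^ β * Frho γ ρ ξ ^ 2 ≤ C1 ^ 2 / (β + 1) * ρ ^ ((β - 1) / γ) := by
    have a1 : ∫ ξ in (0 : ℝ)..h, ξ ^ β * Frho γ ρ ξ ^ 2 ≤
        ∫ ξ in (0 : ℝ)..h, ξ ^ β * (C1 * h⁻¹) ^ 2 := by
      apply intervalIntegral.integral_mono_on hh0.le (w_int0 γ β ρ h hγ0 hβ hρ)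
        ((intervalIntegral.intervalIntegrable_rpow' hβ).mul_const _)
      intro ξ hξ
      have := h1 ρ hρ hρ1 ξ
      rw [hinv] at this
      have h3 : Frho γ ρ ξ ^ 2 ≤ (C1 * h⁻¹) ^ 2 := by
        rw [← sq_abs]; gcongr
      have := Real.rpow_nonneg hξ.1 β
      gcongr
    refine a1.trans (le_of_eq ?_)
    rw [intervalIntegral.integral_mul_const, integral_rpow (Or.inl hβ),
      Real.zero_rpow (by linarith), sub_zero]
    have e : ρ ^ ((β - 1) / γ) = h ^ (β + 1) * (h⁻¹) ^ 2 := by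
      rw [hh, ← Real.rpow_neg_one, ← Real.rpow_natCast, ← Real.rpow_mul hρ.le,
        ← Real.rpow_mul hρ.le, ← Real.rpow_mul hρ.le, ← Real.rpow_add hρ]
      congr 1; push_cast; field_simp; ring
    rw [e]; ring
  have B : ∫ ξ in h..Real.pi, ξ ^ β * Frho γ ρ ξ ^ 2 ≤
      C2 ^ 2 * (ρ ^ 2 * ∫ ξ in h..Real.pi, ξ ^ (β - 2 - 2 * γ)) := by
    have hii : IntervalIntegrable (fun ξ : ℝ => ξ ^ (β - 2 - 2 * γ)) MeasureTheory.volume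
        h Real.pi := by
      apply intervalIntegral.intervalIntegrable_rpow (Or.inr ?_)
      rw [Set.uIcc_of_le hhpi]
      intro hx; linarith [hx.1]
    have b1 : ∫ ξ in h..Real.pi, ξ ^ β * Frho γ ρ ξ ^ 2 ≤
        ∫ ξ in h..Real.pi, (C2 ^ 2 * ρ ^ 2) * ξ ^ (β - 2 - 2 * γ) := by
      apply intervalIntegral.integral_mono_on hhpi
        ((w_int0 γ β ρ h hγ0 hβ hρ).symm.trans (w_int0 γ β ρ Real.pi hγ0 hβ hρ))
        (hii.const_mul _)
      intro ξ hξ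
      have hξ0 : 0 < ξ := by linarith [hξ.1]
      have := h2 ρ ξ hρ hξ0 hξ.2
      have h3 : Frho γ ρ ξ ^ 2 ≤ (C2 * (ρ * ξ ^ (-1 - γ))) ^ 2 := by
        rw [← sq_abs]; gcongr
      have e : ξ ^ (β - 2 - 2 * γ) = ξ ^ β * (ξ ^ (-1 - γ)) ^ 2 := by
        rw [← Real.rpow_natCast, ← Real.rpow_mul hξ0.le, ← Real.rpow_add hξ0]
        congr 1; push_cast; ring
      calc _ ≤ ξ ^ β * (C2 * (ρ * ξ ^ (-1 - γ))) ^ 2 := by gcongr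
        _ = _ := by rw [e]; ring
    refine b1.trans (le_of_eq ?_)
    rw [intervalIntegral.integral_const_mul]; ring
  have hJ : 0 ≤ ∫ ξ in h..Real.pi, ξ ^ (β - 2 - 2 * γ) := by
    apply intervalIntegral.integral_nonneg hhpi
    intro ξ hξ
    exact Real.rpow_nonneg (by linarith [hξ.1]) _
  rw [II_even γ β ρ hγ0 hβ hρ, ← intervalIntegral.integral_add_adjacent_intervals
    (w_int0 γ β ρ h hγ0 hβ hρ)
    ((w_int0 γ β ρ h hγ0 hβ hρ).symm.trans (w_int0 γ β ρ Real.pi hγ0 hβ hρ))]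
  set J := ∫ ξ in h..Real.pi, ξ ^ (β - 2 - 2 * γ)
  have hr : 0 ≤ ρ ^ ((β - 1) / γ) := by positivity
  have p1 : 0 ≤ C1 ^ 2 / (β + 1) * (ρ ^ 2 * J) := by positivity
  have p2 : 0 ≤ C2 ^ 2 * ρ ^ ((β - 1) / γ) := by positivity
  nlinarith

lemma upper1 (γ β : ℝ) (hγ0 : 0 < γ) (hγ2 : γ < 2) (hβ : -1 < β) (h1 : β < 1 + 2 * γ) :
    ∃ C : ℝ, 0 < C ∧ ∀ ρ : ℝ, 0 < ρ → ρ ≤ 1 → II γ β ρ ≤ C * ρ ^ ((β - 1) / γ) := by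
  obtain ⟨C, hC, h⟩ := upper_raw γ β hγ0 hγ2 hβ
  have hq : 0 < 1 + 2 * γ - β := by linarith
  refine ⟨C * (1 + 1 / (1 + 2 * γ - β)), by positivity, ?_⟩
  intro ρ hρ hρ1
  refine (h ρ hρ hρ1).trans ?_
  set h := ρ ^ (1 / γ) with hh
  have hh0 : 0 < h := by positivity
  have hh1 : h ≤ 1 := Real.rpow_le_one hρ.le hρ1 (by positivity)
  have hpi := Real.pi_gt_three
  have hhpi : h ≤ Real.pi := by linarith
  have e : ρ ^ ((β - 1) / γ) = ρ ^ 2 * h ^ (β - 2 - 2 * γ + 1) := by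
    rw [hh, ← Real.rpow_natCast, ← Real.rpow_mul hρ.le, ← Real.rpow_add hρ]
    congr 1; push_cast; field_simp; ring
  have b : ∫ ξ in h..Real.pi, ξ ^ (β - 2 - 2 * γ) ≤
      1 / (1 + 2 * γ - β) * h ^ (β - 2 - 2 * γ + 1) := by
    rw [integral_rpow (Or.inr ⟨by linarith, by
      rw [Set.uIcc_of_le hhpi]; intro hx; linarith [hx.1]⟩)]
    rw [show β - 2 - 2 * γ + 1 = -(1 + 2 * γ - β) by ring, div_neg, ← neg_div, div_eq_inv_mul,
      one_div]
    have : 0 ≤ Real.pi ^ (-(1 + 2 * γ - β)) := by positivity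
    apply mul_le_mul_of_nonneg_left _ (by positivity)
    linarith
  calc _ ≤ C * (ρ ^ ((β - 1) / γ) + ρ ^ 2 * (1 / (1 + 2 * γ - β) * h ^ (β - 2 - 2 * γ + 1))) := by
        gcongr
    _ = _ := by rw [e]; ring

lemma upper3 (γ β : ℝ) (hγ0 : 0 < γ) (hγ2 : γ < 2) (h1 : 1 + 2 * γ < β) :
    ∃ C : ℝ, 0 < C ∧ ∀ ρ : ℝ, 0 < ρ → ρ ≤ 1 → II γ β ρ ≤ C * ρ ^ 2 := by
  obtain ⟨C, hC, h⟩ := upper_raw γ β hγ0 hγ2 (by linarith)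
  have hq : 0 < β - 2 - 2 * γ + 1 := by linarith
  have hpi := Real.pi_gt_three
  refine ⟨C * (1 + Real.pi ^ (β - 2 - 2 * γ + 1) / (β - 2 - 2 * γ + 1)), by positivity, ?_⟩
  intro ρ hρ hρ1
  refine (h ρ hρ hρ1).trans ?_
  set h := ρ ^ (1 / γ) with hh
  have hh0 : 0 < h := by positivity
  have e : ρ ^ ((β - 1) / γ) ≤ ρ ^ 2 := by
    rw [← Real.rpow_natCast]
    apply Real.rpow_le_rpow_of_exponent_ge hρ hρ1
    rw [le_div_iff₀ hγ0]; push_cast; linarith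
  have b : ∫ ξ in h..Real.pi, ξ ^ (β - 2 - 2 * γ) ≤
      Real.pi ^ (β - 2 - 2 * γ + 1) / (β - 2 - 2 * γ + 1) := by
    rw [integral_rpow (Or.inl (by linarith))]
    have : 0 ≤ h ^ (β - 2 - 2 * γ + 1) := by positivity
    gcongr
    linarith
  calc _ ≤ C * (ρ ^ 2 + ρ ^ 2 * (Real.pi ^ (β - 2 - 2 * γ + 1) / (β - 2 - 2 * γ + 1))) := by
        gcongr
    _ = _ := by ring

lemma upper2 (γ β : ℝ) (hγ0 : 0 < γ) (hγ2 : γ < 2) (h1 : β = 1 + 2 * γ) :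
    ∃ C : ℝ, 0 < C ∧ ∀ ρ : ℝ, 0 < ρ → ρ ≤ Real.exp (-1) → 
      II γ β ρ ≤ C * (ρ ^ 2 * |Real.log ρ|) := by
  obtain ⟨C, hC, h⟩ := upper_raw γ β hγ0 hγ2 (by linarith)
  have hpi := Real.pi_gt_three
  have hlp : 0 < Real.log Real.pi := Real.log_pos (by linarith)
  refine ⟨C * (1 + Real.log Real.pi + 1 / γ), by positivity, ?_⟩
  intro ρ hρ hρe
  have hρ1 : ρ ≤ 1 := hρe.trans (Real.exp_le_one_iff.2 (by norm_num))
  refine (h ρ hρ hρ1).trans ?_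
  have hl : Real.log ρ ≤ -1 := by
    rw [Real.log_le_iff_le_exp hρ]; exact hρe
  rw [abs_of_neg (by linarith)]
  set h := ρ ^ (1 / γ) with hh
  have hh0 : 0 < h := by positivity
  have e : ρ ^ ((β - 1) / γ) = ρ ^ 2 := by
    rw [← Real.rpow_natCast]; congr 1; rw [h1]; push_cast; field_simp; ring
  have b : ∫ ξ in h..Real.pi, ξ ^ (β - 2 - 2 * γ) = Real.log Real.pi + 1 / γ * (-Real.log ρ) := by
    rw [show β - 2 - 2 * γ = -1 by rw [h1]; ring]
    simp_rw [Real.rpow_neg_one]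
    rw [integral_inv_of_pos hh0 (by linarith), Real.log_div (by linarith) hh0.ne', hh,
      Real.log_rpow hρ]
    ring
  rw [e, b]
  have : 1 + (Real.log Real.pi + 1 / γ * (-Real.log ρ)) ≤
      (1 + Real.log Real.pi + 1 / γ) * (-Real.log ρ) := by nlinarith
  calc _ = C * ρ ^ 2 * (1 + (Real.log Real.pi + 1 / γ * (-Real.log ρ))) := by ring
    _ ≤ C * ρ ^ 2 * ((1 + Real.log Real.pi + 1 / γ) * (-Real.log ρ)) := by gcongr
    _ = _ := by ring


/-- The kernel `(2 - 2 cos x)^4`. -/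
def KK (x : ℝ) : ℝ := (2 - 2 * Real.cos x) ^ 4

lemma KK_zero : KK 0 = 0 := by simp [KK]

lemma KK_le (x : ℝ) : KK x ≤ 256 := by
  unfold KK
  have h1 := Real.cos_le_one x
  have h2 := Real.neg_one_le_cos x
  calc _ ≤ (4 : ℝ) ^ 4 := by apply pow_le_pow_left₀ <;> linarith
    _ = 256 := by norm_num

lemma KK_le_pow (x : ℝ) : KK x ≤ |x| ^ (8 : ℝ) := by
  unfold KK
  have h1 := Real.cos_le_one x
  have h2 := Real.one_sub_sq_div_two_le_cos (x := x)
  calc _ ≤ (x ^ 2) ^ 4 := by apply pow_le_pow_left₀ <;> linarith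
    _ = |x| ^ (8 : ℝ) := by
      rw [← sq_abs, ← pow_mul, ← Real.rpow_natCast]; norm_num

lemma KK_le_rpow (x β : ℝ) (h0 : 0 ≤ β) (h8 : β ≤ 8) : KK x ≤ 256 * |x| ^ β := by
  rcases eq_or_ne x 0 with rfl | hx
  · rw [KK_zero]; positivity
  have hx' : 0 < |x| := abs_pos.2 hx
  rcases le_total |x| 1 with h | h
  · have h1 := KK_le_pow x
    have h2 : |x| ^ (8 : ℝ) ≤ |x| ^ β := Real.rpow_le_rpow_of_exponent_ge hx' h h8
    have : 0 ≤ |x| ^ β := by positivity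
    linarith
  · have h1 := KK_le x
    have := Real.one_le_rpow h h0
    linarith

lemma int_KK_eq (γ ρ : ℝ) (m : ℕ) :
    ∫ ξ in (-Real.pi)..Real.pi, (2 - 2 * Real.cos (m * ξ)) ^ 4 * Frho γ ρ ξ ^ 2 =
    ∫ ξ in (-Real.pi)..Real.pi, KK (m * ξ) * Frho γ ρ ξ ^ 2 := rfl

lemma KK_cont : Continuous KK := by unfold KK; fun_prop

lemma cmp2 (γ ρ : ℝ) (hγ0 : 0 < γ) (hρ : 0 < ρ) (w : ℝ → ℝ) (hw : Continuous w)
    (β β' A B : ℝ) (hβ : -1 < β) (hβ' : -1 < β')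
    (h : ∀ ξ, |ξ| ≤ Real.pi → w ξ ≤ A * |ξ| ^ β + B * |ξ| ^ β') :
    ∫ ξ in (-Real.pi)..Real.pi, w ξ * Frho γ ρ ξ ^ 2 ≤ A * II γ β ρ + B * II γ β' ρ := by
  have hFc := Frho_continuous γ hγ0 ρ hρ
  unfold II
  rw [← intervalIntegral.integral_const_mul, ← intervalIntegral.integral_const_mul,
    ← intervalIntegral.integral_add ((w_int γ β ρ hγ0 hβ hρ).const_mul _)
      ((w_int γ β' ρ hγ0 hβ' hρ).const_mul _)]
  apply intervalIntegral.integral_mono_on (by linarith [Real.pi_pos])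
    (Continuous.intervalIntegrable (by fun_prop) _ _)
    (((w_int γ β ρ hγ0 hβ hρ).const_mul _).add ((w_int γ β' ρ hγ0 hβ' hρ).const_mul _))
  intro ξ hξ
  have := mul_le_mul_of_nonneg_right (h ξ (abs_le.2 hξ)) (sq_nonneg (Frho γ ρ ξ))
  linarith

lemma cmp1 (γ ρ : ℝ) (hγ0 : 0 < γ) (hρ : 0 < ρ) (w : ℝ → ℝ) (hw : Continuous w)
    (β A : ℝ) (hβ : -1 < β) (h : ∀ ξ, |ξ| ≤ Real.pi → w ξ ≤ A * |ξ| ^ β) :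
    ∫ ξ in (-Real.pi)..Real.pi, w ξ * Frho γ ρ ξ ^ 2 ≤ A * II γ β ρ := by
  have := cmp2 γ ρ hγ0 hρ w hw β β A 0 hβ hβ (fun ξ hξ => by simpa using h ξ hξ)
  simpa using this

lemma choose_m (γ a ρ : ℝ) (hγ0 : 0 < γ) (hρ : 0 < ρ) (hρa : ρ ≤ a) :
    ∃ m : ℕ, 1 ≤ m ∧ ρ * (m : ℝ) ^ γ ≤ a ∧ (a / ρ) ^ (1 / γ) / 2 ≤ m ∧
      (a / ρ) ^ (1 / γ) ≤ m + 1 := by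
  have ha : 0 < a := by linarith
  have h1 : 1 ≤ a / ρ := by rwa [one_le_div hρ]
  have h2 : 1 ≤ (a / ρ) ^ (1 / γ) := Real.one_le_rpow h1 (by positivity)
  refine ⟨⌊(a / ρ) ^ (1 / γ)⌋₊, Nat.le_floor (by simpa using h2), ?_, ?_, ?_⟩
  · have h3 : ((⌊(a / ρ) ^ (1 / γ)⌋₊ : ℕ) : ℝ) ≤ (a / ρ) ^ (1 / γ) := Nat.floor_le (by positivity)
    have h4 : ((⌊(a / ρ) ^ (1 / γ)⌋₊ : ℕ) : ℝ) ^ γ ≤ ((a / ρ) ^ (1 / γ)) ^ γ := by gcongr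
    rw [← Real.rpow_mul (by positivity), one_div_mul_cancel hγ0.ne', Real.rpow_one,
      le_div_iff₀ hρ] at h4
    linarith
  · have h3 := Nat.lt_floor_add_one ((a / ρ) ^ (1 / γ))
    have h4 : 1 ≤ ⌊(a / ρ) ^ (1 / γ)⌋₊ := Nat.le_floor (by simpa using h2)
    have h5 : (1 : ℝ) ≤ ((⌊(a / ρ) ^ (1 / γ)⌋₊ : ℕ) : ℝ) := by exact_mod_cast h4
    linarith
  · exact (Nat.lt_floor_add_one _).le

lemma scale_eq (γ a ρ q : ℝ) (ha : 0 < a) (hρ : 0 < ρ) :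
    ((a / ρ) ^ (1 / γ) / 2) ^ q = (a ^ (1 / γ) / 2) ^ q * ρ ^ (-(q / γ)) := by
  rw [Real.div_rpow ha.le hρ.le, show a ^ (1 / γ) / ρ ^ (1 / γ) / 2 =
    (a ^ (1 / γ) / 2) / ρ ^ (1 / γ) by ring, Real.div_rpow (by positivity) (by positivity),
    ← Real.rpow_mul hρ.le, Real.rpow_neg hρ.le, div_eq_mul_inv]
  congr 3; ring

lemma lower1a (γ β : ℝ) (hγ0 : 0 < γ) (hγ2 : γ < 2) (hβ : 0 ≤ β) (h1 : β < 1 + 2 * γ) :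
    ∃ c ρ₀ : ℝ, 0 < c ∧ 0 < ρ₀ ∧ ∀ ρ : ℝ, 0 < ρ → ρ < ρ₀ → c * ρ ^ ((β - 1) / γ) ≤ II γ β ρ := by
  obtain ⟨c, a, hc, ha, h⟩ := parseval_lower γ hγ0 hγ2
  refine ⟨c / 256 * (a ^ (1 / γ) / 2) ^ (1 + 2 * γ - β), a, by positivity, ha, ?_⟩
  intro ρ hρ hρa
  obtain ⟨m, hm1, hm2, hm3, -⟩ := choose_m γ a ρ hγ0 hρ hρa.le
  have hm0 : (0 : ℝ) < m := by exact_mod_cast hm1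
  have hP := h ρ m hρ hm1 hm2
  rw [int_KK_eq] at hP
  have hQ := cmp1 γ ρ hγ0 hρ (fun ξ => KK (m * ξ)) (KK_cont.comp (by fun_prop)) β
    (256 * (m : ℝ) ^ β) (by linarith) (fun ξ _ => by
      refine (KK_le_rpow _ β hβ (by linarith)).trans (le_of_eq ?_)
      rw [abs_mul, abs_of_pos hm0, Real.mul_rpow hm0.le (abs_nonneg _)]; ring)
  have hR := hP.trans hQ
  have e : (m : ℝ) ^ (1 + 2 * γ) = m ^ β * m ^ (1 + 2 * γ - β) := by
    rw [← Real.rpow_add hm0]; congr 1; ring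
  have hmb : 0 < (m : ℝ) ^ β := by positivity
  have h5 : c / 256 * ρ ^ 2 * (m : ℝ) ^ (1 + 2 * γ - β) ≤ II γ β ρ := by
    rw [e] at hR
    have : (256 * (m : ℝ) ^ β) * (c / 256 * ρ ^ 2 * (m : ℝ) ^ (1 + 2 * γ - β)) ≤
      (256 * (m : ℝ) ^ β) * II γ β ρ := by linarith
    exact le_of_mul_le_mul_left this (by positivity)
  have h6 : ((a / ρ) ^ (1 / γ) / 2) ^ (1 + 2 * γ - β) ≤ (m : ℝ) ^ (1 + 2 * γ - β) :=
    Real.rpow_le_rpow (by positivity) hm3 (by linarith)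
  rw [scale_eq γ a ρ _ ha hρ] at h6
  have e2 : ρ ^ ((β - 1) / γ) = ρ ^ 2 * ρ ^ (-((1 + 2 * γ - β) / γ)) := by
    rw [← Real.rpow_natCast, ← Real.rpow_add hρ]; congr 1; push_cast; field_simp; ring
  calc _ = c / 256 * ρ ^ 2 *
        ((a ^ (1 / γ) / 2) ^ (1 + 2 * γ - β) * ρ ^ (-((1 + 2 * γ - β) / γ))) := by rw [e2]; ring
    _ ≤ c / 256 * ρ ^ 2 * (m : ℝ) ^ (1 + 2 * γ - β) := by gcongr
    _ ≤ _ := h5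

lemma lower1b (γ β : ℝ) (hγ0 : 0 < γ) (hγ2 : γ < 2) (hβ1 : -1 < β) (hβ : β < 0) :
    ∃ c ρ₀ : ℝ, 0 < c ∧ 0 < ρ₀ ∧ ∀ ρ : ℝ, 0 < ρ → ρ < ρ₀ → c * ρ ^ ((β - 1) / γ) ≤ II γ β ρ := by
  obtain ⟨c, a, hc, ha, h⟩ := parseval_lower γ hγ0 hγ2
  obtain ⟨C, hC, hu⟩ := upper1 γ 1 hγ0 hγ2 (by norm_num) (by linarith)
  set b : ℝ := (a ^ (1 / γ) / 2) ^ (2 * γ) with hb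
  have hb0 : 0 < b := by positivity
  set ε : ℝ := c * b / (512 * C) with hε
  have hε0 : 0 < ε := by positivity
  refine ⟨c * b / 512 * (ε ^ β)⁻¹ * (a ^ (1 / γ) / 2) ^ (1 - β), min a 1, by positivity,
    by positivity, ?_⟩
  intro ρ hρ hρa'
  have hρa : ρ < a := hρa'.trans_le (min_le_left _ _)
  have hρ1 : ρ < 1 := hρa'.trans_le (min_le_right _ _)
  obtain ⟨m, hm1, hm2, hm3, -⟩ := choose_m γ a ρ hγ0 hρ hρa.le
  have hm0 : (0 : ℝ) < m := by exact_mod_cast hm1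
  have hP := h ρ m hρ hm1 hm2
  rw [int_KK_eq] at hP
  have hQ := cmp2 γ ρ hγ0 hρ (fun ξ => KK (m * ξ)) (KK_cont.comp (by fun_prop)) 1 β
    (256 * ε * m) (256 * ε ^ β * (m : ℝ) ^ β) (by norm_num) hβ1 (fun ξ _ => by
      rcases eq_or_ne ξ 0 with rfl | hξ
      · simp only [mul_zero, KK_zero]; positivity
      have hξ' : 0 < |ξ| := abs_pos.2 hξ
      have hK := KK_le (m * ξ)
      have e : 256 * ε ^ β * (m : ℝ) ^ β * |ξ| ^ β = 256 * (ε * (m * |ξ|)) ^ β := by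
        rw [Real.mul_rpow hε0.le (by positivity), Real.mul_rpow hm0.le hξ'.le]; ring
      have e' : 256 * ε * m * |ξ| ^ (1 : ℝ) = 256 * (ε * (m * |ξ|)) := by
        rw [Real.rpow_one]; ring
      simp only [e, e']
      have hz : 0 < ε * (m * |ξ|) := by positivity
      rcases le_total 1 (ε * (m * |ξ|)) with h1 | h1
      · have : 0 ≤ (ε * (m * |ξ|)) ^ β := by positivity
        linarith
      · have := Real.one_le_rpow_of_pos_of_le_one_of_nonpos hz h1 hβ.le
        linarith)
  have hR := hP.trans hQ
  have hI1 := hu ρ hρ hρ1.le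
  rw [sub_self, zero_div, Real.rpow_zero, mul_one] at hI1
  have e : (m : ℝ) ^ (1 + 2 * γ) = m * m ^ (2 * γ) := by
    rw [Real.rpow_add hm0, Real.rpow_one]
  have h6 : ((a / ρ) ^ (1 / γ) / 2) ^ (2 * γ) ≤ (m : ℝ) ^ (2 * γ) :=
    Real.rpow_le_rpow (by positivity) hm3 (by linarith)
  rw [scale_eq γ a ρ _ ha hρ] at h6
  have e3 : ρ ^ 2 * ρ ^ (-(2 * γ / γ)) = 1 := by
    rw [← Real.rpow_natCast, ← Real.rpow_add hρ, mul_div_cancel_right₀ _ hγ0.ne']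
    norm_num
  have h7 : b ≤ ρ ^ 2 * (m : ℝ) ^ (2 * γ) := by
    calc b = ρ ^ 2 * (b * ρ ^ (-(2 * γ / γ))) := by
          rw [show ρ ^ 2 * (b * ρ ^ (-(2 * γ / γ))) = b * (ρ ^ 2 * ρ ^ (-(2 * γ / γ))) by ring, e3,
            mul_one]
      _ ≤ _ := by gcongr
  have h8 : c * b * m ≤ c * ρ ^ 2 * (m : ℝ) ^ (1 + 2 * γ) := by
    rw [e]
    calc c * b * m ≤ c * (ρ ^ 2 * (m : ℝ) ^ (2 * γ)) * m := by gcongr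
      _ = _ := by ring
  have h9 : 256 * ε * m * II γ 1 ρ ≤ c * b * m / 2 := by
    calc 256 * ε * m * II γ 1 ρ ≤ 256 * ε * m * C := by gcongr
      _ = c * b * m / 2 := by rw [hε]; field_simp; norm_num
  have h10 : c * b * m / 2 ≤ 256 * ε ^ β * (m : ℝ) ^ β * II γ β ρ := by linarith
  have hmb : 0 < (m : ℝ) ^ β := by positivity
  have heb : 0 < ε ^ β := by positivity
  have e4 : (m : ℝ) = m ^ β * m ^ (1 - β) := by
    rw [← Real.rpow_add hm0]; ring_nf; rw [Real.rpow_one]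
  have h11 : c * b / 512 * (ε ^ β)⁻¹ * (m : ℝ) ^ (1 - β) ≤ II γ β ρ := by
    have : (256 * ε ^ β * (m : ℝ) ^ β) * (c * b / 512 * (ε ^ β)⁻¹ * (m : ℝ) ^ (1 - β)) ≤
        (256 * ε ^ β * (m : ℝ) ^ β) * II γ β ρ := by
      refine le_trans (le_of_eq ?_) h10
      calc _ = (c * b / 2) * (ε ^ β * (ε ^ β)⁻¹) * (m ^ β * (m : ℝ) ^ (1 - β)) := by ring
        _ = _ := by rw [← e4, mul_inv_cancel₀ heb.ne']; ring
    exact le_of_mul_le_mul_left this (by positivity)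
  have h12 : ((a / ρ) ^ (1 / γ) / 2) ^ (1 - β) ≤ (m : ℝ) ^ (1 - β) :=
    Real.rpow_le_rpow (by positivity) hm3 (by linarith)
  rw [scale_eq γ a ρ _ ha hρ, show -((1 - β) / γ) = (β - 1) / γ by ring] at h12
  calc _ = c * b / 512 * (ε ^ β)⁻¹ * ((a ^ (1 / γ) / 2) ^ (1 - β) * ρ ^ ((β - 1) / γ)) := by ring
    _ ≤ c * b / 512 * (ε ^ β)⁻¹ * (m : ℝ) ^ (1 - β) := by gcongr
    _ ≤ _ := h11

lemma kernel_sum (β : ℝ) (h1 : 1 ≤ β) (h7 : β ≤ 7) : ∃ A : ℝ, 0 < A ∧ ∀ (X : ℕ) (ξ : ℝ),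
    ∑ k ∈ Finset.range X, ((k : ℝ) + 1) ^ (-(β + 1)) * KK (((k + 1 : ℕ) : ℝ) * ξ) ≤
      A * |ξ| ^ β := by
  refine ⟨256 * 2 ^ (β + 1) * (1 / β), by positivity, ?_⟩
  intro X ξ
  rcases eq_or_ne ξ 0 with rfl | hξ
  · simp [KK_zero]; positivity
  have hξ' : 0 < |ξ| := abs_pos.2 hξ
  have hpt : ∀ k ∈ Finset.range X, ((k : ℝ) + 1) ^ (-(β + 1)) * KK (((k + 1 : ℕ) : ℝ) * ξ) ≤
      256 * 2 ^ (β + 1) * |ξ| ^ (β + 1) * (1 + ((k : ℝ) + 1) / |ξ|⁻¹) ^ (-(β + 1)) := by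
    intro k _
    have hk : (0 : ℝ) < (k : ℝ) + 1 := by positivity
    set x := ((k : ℝ) + 1) * |ξ| with hx
    have hx0 : 0 < x := by positivity
    have e1 : ((k : ℝ) + 1) / |ξ|⁻¹ = x := by rw [hx, div_inv_eq_mul]
    have e2 : ((k : ℝ) + 1) ^ (-(β + 1)) = |ξ| ^ (β + 1) * x ^ (-(β + 1)) := by
      rw [hx, Real.mul_rpow hk.le hξ'.le, Real.rpow_neg hξ'.le]
      have : |ξ| ^ (β + 1) ≠ 0 := by positivity
      field_simp
    have e3 : |((k + 1 : ℕ) : ℝ) * ξ| = x := by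
      rw [abs_mul]; push_cast; rw [abs_of_pos hk]
    rw [e1, e2]
    have hK : x ^ (-(β + 1)) * KK (((k + 1 : ℕ) : ℝ) * ξ) ≤
        256 * 2 ^ (β + 1) * (1 + x) ^ (-(β + 1)) := by
      have hxp : 0 < x ^ (-(β + 1)) := by positivity
      rcases le_total x 1 with h | h
      · have hk1 := KK_le_rpow (((k + 1 : ℕ) : ℝ) * ξ) (β + 1) (by linarith) (by linarith)
        rw [e3] at hk1
        have q1 : x ^ (-(β + 1)) * KK (((k + 1 : ℕ) : ℝ) * ξ) ≤ 256 := by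
          calc _ ≤ x ^ (-(β + 1)) * (256 * x ^ (β + 1)) := by gcongr
            _ = 256 * (x ^ (-(β + 1)) * x ^ (β + 1)) := by ring
            _ = 256 := by rw [← Real.rpow_add hx0]; simp
        have q2 : (2 : ℝ) ^ (-(β + 1)) ≤ (1 + x) ^ (-(β + 1)) :=
          Real.rpow_le_rpow_of_nonpos (by positivity) (by linarith) (by linarith)
        have q3 : (2 : ℝ) ^ (β + 1) * (2 : ℝ) ^ (-(β + 1)) = 1 := by
          rw [← Real.rpow_add (by norm_num)]; simp
        calc _ ≤ 256 := q1
          _ = 256 * ((2 : ℝ) ^ (β + 1) * (2 : ℝ) ^ (-(β + 1))) := by rw [q3]; ring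
          _ ≤ 256 * ((2 : ℝ) ^ (β + 1) * (1 + x) ^ (-(β + 1))) := by gcongr
          _ = _ := by ring
      · have hk1 := KK_le (((k + 1 : ℕ) : ℝ) * ξ)
        have q2 : x ^ (-(β + 1)) ≤ (2⁻¹ * (1 + x)) ^ (-(β + 1)) :=
          Real.rpow_le_rpow_of_nonpos (by positivity) (by linarith) (by linarith)
        have q3 : (2⁻¹ * (1 + x)) ^ (-(β + 1)) = 2 ^ (β + 1) * (1 + x) ^ (-(β + 1)) := by
          rw [Real.mul_rpow (x := (2 : ℝ)⁻¹) (y := 1 + x) (by norm_num) (by positivity),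
            Real.inv_rpow (by norm_num), ← Real.rpow_neg (by norm_num), neg_neg]
        rw [q3] at q2
        calc _ ≤ x ^ (-(β + 1)) * 256 := by gcongr
          _ ≤ (2 ^ (β + 1) * (1 + x) ^ (-(β + 1))) * 256 := by gcongr
          _ = _ := by ring
    calc _ = |ξ| ^ (β + 1) * (x ^ (-(β + 1)) * KK (((k + 1 : ℕ) : ℝ) * ξ)) := by ring
      _ ≤ |ξ| ^ (β + 1) * (256 * 2 ^ (β + 1) * (1 + x) ^ (-(β + 1))) := by gcongr
      _ = _ := by ring
  refine (Finset.sum_le_sum hpt).trans ?_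
  rw [← Finset.mul_sum]
  have hS := sumS (β + 1) |ξ|⁻¹ (by linarith) (by positivity) X
  calc _ ≤ 256 * 2 ^ (β + 1) * |ξ| ^ (β + 1) * (|ξ|⁻¹ / (β + 1 - 1)) := by gcongr
    _ = _ := by
      rw [Real.rpow_add_one hξ'.ne' β, add_sub_cancel_right]; field_simp

lemma lower2 (γ β : ℝ) (hγ0 : 0 < γ) (hγ2 : γ < 2) (h1 : β = 1 + 2 * γ) :
    ∃ c ρ₀ : ℝ, 0 < c ∧ 0 < ρ₀ ∧ ∀ ρ : ℝ, 0 < ρ → ρ < ρ₀ →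
      c * (ρ ^ 2 * |Real.log ρ|) ≤ II γ β ρ := by
  obtain ⟨c, a, hc, ha, h⟩ := parseval_lower γ hγ0 hγ2
  obtain ⟨A, hA, hker⟩ := kernel_sum β (by linarith) (by linarith)
  refine ⟨c / (2 * γ * A), min (min a 1) (a ^ 2), by positivity, by positivity, ?_⟩
  intro ρ hρ hρ'
  have hρa : ρ < a := hρ'.trans_le ((min_le_left _ _).trans (min_le_left _ _))
  have hρ1 : ρ < 1 := hρ'.trans_le ((min_le_left _ _).trans (min_le_right _ _))
  have hρ2 : ρ < a ^ 2 := hρ'.trans_le (min_le_right _ _)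
  obtain ⟨X, hX1, hX2, -, hX4⟩ := choose_m γ a ρ hγ0 hρ hρa.le
  have hFc := Frho_continuous γ hγ0 ρ hρ
  have hKc : ∀ k : ℕ, Continuous fun ξ : ℝ => KK (((k + 1 : ℕ) : ℝ) * ξ) :=
    fun k => KK_cont.comp (by fun_prop)
  have hQ := cmp1 γ ρ hγ0 hρ (fun ξ => ∑ k ∈ Finset.range X,
    ((k : ℝ) + 1) ^ (-(β + 1)) * KK (((k + 1 : ℕ) : ℝ) * ξ))
    (continuous_finsetSum _ fun k _ => continuous_const.mul (hKc k)) β A (by linarith)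
    (fun ξ _ => hker X ξ)
  simp only [Finset.sum_mul] at hQ
  have hii : ∀ k ∈ Finset.range X, IntervalIntegrable (fun ξ : ℝ =>
      ((k : ℝ) + 1) ^ (-(β + 1)) * KK (((k + 1 : ℕ) : ℝ) * ξ) * Frho γ ρ ξ ^ 2)
      MeasureTheory.volume (-Real.pi) Real.pi := fun k _ =>
    Continuous.intervalIntegrable ((continuous_const.mul (hKc k)).mul (hFc.pow 2)) _ _
  rw [intervalIntegral.integral_finsetSum hii] at hQ
  have hP : ∀ k ∈ Finset.range X, c * ρ ^ 2 * ((k : ℝ) + 1)⁻¹ ≤ ∫ ξ in (-Real.pi)..Real.pi,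
      ((k : ℝ) + 1) ^ (-(β + 1)) * KK (((k + 1 : ℕ) : ℝ) * ξ) * Frho γ ρ ξ ^ 2 := by
    intro k hk
    have hk1 : k + 1 ≤ X := Finset.mem_range.1 hk
    have hk0 : (0 : ℝ) < (k : ℝ) + 1 := by positivity
    have := h ρ (k + 1) hρ (by omega) (by
      refine le_trans ?_ hX2
      have : (((k + 1 : ℕ)) : ℝ) ≤ X := by exact_mod_cast hk1
      gcongr)
    rw [int_KK_eq] at this
    simp_rw [mul_assoc]
    rw [intervalIntegral.integral_const_mul]
    refine le_trans (le_of_eq ?_) (mul_le_mul_of_nonneg_left this (by positivity))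
    have e : ((k : ℝ) + 1)⁻¹ = ((k : ℝ) + 1) ^ (-(β + 1)) * ((k : ℝ) + 1) ^ (1 + 2 * γ) := by
      rw [← Real.rpow_add hk0, ← Real.rpow_neg_one, h1]; congr 1; ring
    push_cast
    rw [e]; ring
  have hR := (Finset.sum_le_sum hP).trans hQ
  rw [← Finset.mul_sum] at hR
  have hH : ∑ k ∈ Finset.range X, ((k : ℝ) + 1)⁻¹ = ((harmonic X : ℚ) : ℝ) := by
    simp [harmonic]
  have hlog := log_add_one_le_harmonic X
  rw [← hH] at hlog
  have hl2 : Real.log ((a / ρ) ^ (1 / γ)) ≤ Real.log ((X + 1 : ℕ) : ℝ) := by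
    apply Real.log_le_log (by positivity)
    push_cast; exact hX4
  rw [Real.log_rpow (by positivity), Real.log_div ha.ne' hρ.ne'] at hl2
  have hl3 : Real.log ρ ≤ 2 * Real.log a := by
    have := Real.log_le_log hρ hρ2.le
    rw [Real.log_pow] at this
    push_cast at this; exact this
  have hl0 : Real.log ρ < 0 := Real.log_neg hρ hρ1
  rw [abs_of_neg hl0]
  have h5 : 1 / (2 * γ) * (-Real.log ρ) ≤ ∑ k ∈ Finset.range X, ((k : ℝ) + 1)⁻¹ := by
    refine le_trans ?_ (hl2.trans hlog)
    calc 1 / (2 * γ) * (-Real.log ρ) = 1 / γ * (-Real.log ρ / 2) := by field_simp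
      _ ≤ _ := by apply mul_le_mul_of_nonneg_left _ (by positivity); linarith
  have h6 : c * ρ ^ 2 * (1 / (2 * γ) * (-Real.log ρ)) ≤ A * II γ β ρ :=
    le_trans (by gcongr) hR
  have h7 : A * (c / (2 * γ * A) * (ρ ^ 2 * (-Real.log ρ))) ≤ A * II γ β ρ := by
    refine le_trans (le_of_eq ?_) h6
    field_simp
  exact le_of_mul_le_mul_left h7 hA

lemma lower3 (γ β : ℝ) (hγ0 : 0 < γ) (hγ2 : γ < 2) (h1 : 1 + 2 * γ < β) :
    ∃ c ρ₀ : ℝ, 0 < c ∧ 0 < ρ₀ ∧ ∀ ρ : ℝ, 0 < ρ → ρ < ρ₀ → c * ρ ^ 2 ≤ II γ β ρ := by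
  obtain ⟨c, a, hc, ha, h⟩ := parseval_lower γ hγ0 hγ2
  have hP : ∀ ρ : ℝ, 0 < ρ → ρ < a → 
      c * ρ ^ 2 ≤ ∫ ξ in (-Real.pi)..Real.pi, KK ξ * Frho γ ρ ξ ^ 2 := by
    intro ρ hρ hρa
    have := h ρ 1 hρ le_rfl (by simpa using hρa.le)
    rw [int_KK_eq] at this
    simpa using this
  rcases le_or_gt β 8 with h8 | h8
  · refine ⟨c / 256, a, by positivity, ha, fun ρ hρ hρa => ?_⟩
    have := (hP ρ hρ hρa).trans (cmp1 γ ρ hγ0 hρ KK KK_cont β 256 (by linarith)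
      (fun ξ _ => KK_le_rpow ξ β (by linarith) h8))
    linarith
  · obtain ⟨C, hC, hu⟩ := upper3 γ 6 hγ0 hγ2 (by linarith)
    set ε : ℝ := c / (2 * C) with hε
    have hε0 : 0 < ε := by positivity
    set s : ℝ := ε ^ (1 / 2 : ℝ) with hs
    have hs0 : 0 < s := by positivity
    have hs2 : s ^ (2 : ℝ) = ε := by
      rw [hs, ← Real.rpow_mul hε0.le]; norm_num
    refine ⟨c / 2 * (s ^ (8 - β))⁻¹, min a 1, by positivity, by positivity, fun ρ hρ hρ' => ?_⟩
    have hρa : ρ < a := hρ'.trans_le (min_le_left _ _)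
    have hρ1 : ρ < 1 := hρ'.trans_le (min_le_right _ _)
    have hQ := (hP ρ hρ hρa).trans (cmp2 γ ρ hγ0 hρ KK KK_cont 6 β ε (s ^ (8 - β)) (by norm_num)
      (by linarith) (fun ξ _ => by
        rcases eq_or_ne ξ 0 with rfl | hξ
        · rw [KK_zero]; positivity
        have hξ' : 0 < |ξ| := abs_pos.2 hξ
        refine (KK_le_pow ξ).trans ?_
        have p1 : 0 ≤ ε * |ξ| ^ (6 : ℝ) := by positivity
        have p2 : 0 ≤ s ^ (8 - β) * |ξ| ^ β := by positivity
        rcases le_total |ξ| s with hle | hle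
        · have : |ξ| ^ (8 : ℝ) ≤ ε * |ξ| ^ (6 : ℝ) := by
            rw [show (8 : ℝ) = 2 + 6 by norm_num, Real.rpow_add hξ', ← hs2]
            gcongr
          linarith
        · have : |ξ| ^ (8 : ℝ) ≤ s ^ (8 - β) * |ξ| ^ β := by
            rw [show (8 : ℝ) = (8 - β) + β by ring, Real.rpow_add hξ']
            have := Real.rpow_le_rpow_of_nonpos hs0 hle (show 8 - β ≤ 0 by linarith)
            rw [show (8 - β) + β - β = 8 - β by ring]
            gcongr
          linarith))
    have hI := hu ρ hρ hρ1.le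
    have h5 : ε * II γ 6 ρ ≤ c / 2 * ρ ^ 2 := by
      calc ε * II γ 6 ρ ≤ ε * (C * ρ ^ 2) := by gcongr
        _ = _ := by rw [hε]; field_simp
    have h6 : c / 2 * ρ ^ 2 ≤ s ^ (8 - β) * II γ β ρ := by linarith
    have hsp : 0 < s ^ (8 - β) := by positivity
    rw [mul_right_comm, ← div_eq_mul_inv, div_le_iff₀ hsp]
    linarith

theorem stmt8 (γ β : ℝ) (hγ0 : 0 < γ) (hγ2 : γ < 2) (hβ : -1 < β) :
    ∃ c C ρ₀ : ℝ, 0 < c ∧ 0 < C ∧ 0 < ρ₀ ∧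
      ∀ ρ : ℝ, 0 < ρ → ρ < ρ₀ →
        c * (if β < 1 + 2 * γ then ρ ^ ((β - 1) / γ)
             else if β = 1 + 2 * γ then ρ ^ 2 * |Real.log ρ|
             else ρ ^ 2) ≤
          (∫ ξ in (-Real.pi)..Real.pi, |ξ| ^ β * Frho γ ρ ξ ^ 2) ∧
        (∫ ξ in (-Real.pi)..Real.pi, |ξ| ^ β * Frho γ ρ ξ ^ 2) ≤
          C * (if β < 1 + 2 * γ then ρ ^ ((β - 1) / γ)
               else if β = 1 + 2 * γ then ρ ^ 2 * |Real.log ρ|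
               else ρ ^ 2) := by
  by_cases h1 : β < 1 + 2 * γ
  · obtain ⟨C, hC, hu⟩ := upper1 γ β hγ0 hγ2 hβ h1
    have hl : ∃ c ρ₀ : ℝ, 0 < c ∧ 0 < ρ₀ ∧
        ∀ ρ : ℝ, 0 < ρ → ρ < ρ₀ → c * ρ ^ ((β - 1) / γ) ≤ II γ β ρ := by
      rcases le_or_gt 0 β with h0 | h0
      · exact lower1a γ β hγ0 hγ2 h0 h1
      · exact lower1b γ β hγ0 hγ2 hβ h0
    obtain ⟨c, r, hc, hr, hl⟩ := hl
    refine ⟨c, C, min r 1, hc, hC, by positivity, fun ρ hρ hρr => ?_⟩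
    simp only [if_pos h1]
    exact ⟨hl ρ hρ (hρr.trans_le (min_le_left _ _)), hu ρ hρ (hρr.trans_le (min_le_right _ _)).le⟩
  · by_cases h2 : β = 1 + 2 * γ
    · obtain ⟨C, hC, hu⟩ := upper2 γ β hγ0 hγ2 h2
      obtain ⟨c, r, hc, hr, hl⟩ := lower2 γ β hγ0 hγ2 h2
      refine ⟨c, C, min r (Real.exp (-1)), hc, hC, by positivity, fun ρ hρ hρr => ?_⟩
      simp only [if_neg h1, if_pos h2]
      exact ⟨hl ρ hρ (hρr.trans_le (min_le_left _ _)),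
        hu ρ hρ (hρr.trans_le (min_le_right _ _)).le⟩
    · have h3 : 1 + 2 * γ < β := lt_of_le_of_ne (not_lt.1 h1) (Ne.symm h2)
      obtain ⟨C, hC, hu⟩ := upper3 γ β hγ0 hγ2 h3
      obtain ⟨c, r, hc, hr, hl⟩ := lower3 γ β hγ0 hγ2 h3
      refine ⟨c, C, min r 1, hc, hC, by positivity, fun ρ hρ hρr => ?_⟩
      simp only [if_neg h1, if_neg h2]
      exact ⟨hl ρ hρ (hρr.trans_le (min_le_left _ _)),
        hu ρ hρ (hρr.trans_le (min_le_right _ _)).le⟩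
end
end
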